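/- Extended generalized Faulhaber formula: Let m ∈ ℂ with m ≠ −1 and let x ∈ ℝ with x > 0. Then the series ∑_{k=1}^{∞} (−1)^k (∑_{l=1}^{k} C(m+1, l) S_k^{(1)}(l) B_l({x})) / ((x+1)(x+2)⋯(x+k)) converges absolutely, and ∑_{k=1}^{⌊x⌋} k^m = x^{m+1}/(m+1) + ζ(−m) + (x^{m+1}/(m+1)) ∑_{k=1}^{∞} (−1)^k (∑_{l=1}^{k} C(m+1, l) S_k^{(1)}(l) B_l({x})) / ((x+1)(x+2)⋯(x+k)). -/

import Mathlib

open Finset in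
/-- Unsigned Stirling numbers of the first kind, via the rising-factorial recurrence:
`z(z+1)⋯(z+k−1) = ∑ l, stirling1Unsigned k l * z^l`. -/
def stirling1Unsigned : ℕ → ℕ → ℕ
  | 0, 0 => 1
  | 0, _ + 1 => 0
  | k + 1, 0 => k * stirling1Unsigned k 0
  | k + 1, l + 1 => stirling1Unsigned k l + k * stirling1Unsigned k (l + 1)

/-- The Stirling numbers of the first kind `S_k^{(1)}(l)` of the paper, defined by
`z(z+1)⋯(z+k−1) = (−1)^k ∑_{l=0}^k (−1)^l S_k^{(1)}(l) z^l`, i.e.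
`S_k^{(1)}(l) = (−1)^{k−l}` times the coefficient of `z^l` in the rising factorial. -/
def S1 (k l : ℕ) : ℤ := (-1) ^ (k + l) * stirling1Unsigned k l

/-- The `n`-th Bernoulli polynomial `B_n(x) = ∑_{k=0}^n C(n,k) B_k x^{n−k}`,
with `B_1 = −1/2`. -/
noncomputable def bernPoly (n : ℕ) (x : ℝ) : ℝ :=
  ∑ k ∈ Finset.range (n + 1), (n.choose k : ℝ) * (bernoulli k : ℝ) * x ^ (n - k)

/-- The generalized binomial coefficient `C(w,k) = w(w−1)⋯(w−k+1)/k!`. -/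
noncomputable def cchoose (w : ℂ) (k : ℕ) : ℂ :=
  (∏ i ∈ Finset.range k, (w - i)) / (k.factorial : ℂ)

/-- The rising product `(z+1)(z+2)⋯(z+k)`. -/
noncomputable def risingProd (z : ℂ) (k : ℕ) : ℂ :=
  ∏ i ∈ Finset.range k, (z + i + 1)

/-- The rising product `(x+1)(x+2)⋯(x+k)` over the reals. -/
noncomputable def risingProdR (x : ℝ) (k : ℕ) : ℝ :=
  ∏ i ∈ Finset.range k, (x + i + 1)

/-- The digamma function `ψ(z) = Γ′(z)/Γ(z)`. -/
noncomputable def digamma (z : ℂ) : ℂ := deriv Complex.Gamma z / Complex.Gamma z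

section
open Complex

theorem st_zero : ∀ (k l : ℕ), k < l → stirling1Unsigned k l = 0
  | 0, l + 1, _ => rfl
  | k + 1, l + 1, h => by
    rw [stirling1Unsigned, st_zero k l (by omega), st_zero k (l + 1) (by omega)]; simp

theorem st_succ_zero (k : ℕ) : stirling1Unsigned (k + 1) 0 = 0 := by
  induction k with
  | zero => simp [stirling1Unsigned]
  | succ k ih => rw [stirling1Unsigned, ih]; simp

def SS (r : ℝ) : Set ℂ := {t | -r < t.re ∧ |t.im| < r}

theorem SS_open (r : ℝ) : IsOpen (SS r) :=
  (isOpen_lt continuous_const Complex.continuous_re).inter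
    (isOpen_lt (continuous_abs.comp Complex.continuous_im) continuous_const)

theorem SS_zero {r : ℝ} (hr : 0 < r) : (0 : ℂ) ∈ SS r := by simp [SS, hr]

theorem SS_mono {r r' : ℝ} (h : r ≤ r') : SS r ⊆ SS r' := fun t ht => by
  simp only [SS, Set.mem_ofPred_eq] at *; constructor <;> linarith

theorem SS_scale {r : ℝ} {t : ℂ} (ht : t ∈ SS r) {v : ℝ} (h0 : 0 ≤ v) (h1 : v ≤ 1) :
    (v : ℂ) * t ∈ SS r := by
  simp only [SS, Set.mem_ofPred_eq, re_ofReal_mul, im_ofReal_mul] at *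
  have hr : 0 < r := lt_of_le_of_lt (abs_nonneg _) ht.2
  refine ⟨by nlinarith [mul_nonneg h0 (sub_nonneg.2 ht.1.le), mul_nonneg hr.le (sub_nonneg.2 h1), mul_nonneg h0 h0, ht.1, mul_lt_mul_of_pos_left ht.1 hr], ?_⟩
  rw [abs_mul, abs_of_nonneg h0]
  nlinarith [abs_nonneg t.im]

theorem one_sub_slit {u : ℂ} (hu : u ∈ Metric.ball (0:ℂ) 1) : 0 < (1 - u).re := by
  have : ‖u‖ < 1 := by simpa using hu
  have := (abs_le.1 (abs_re_le_norm u)).2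
  simp; linarith

theorem log_mem {u : ℂ} (hu : u ∈ Metric.ball (0:ℂ) 1) : -log (1 - u) ∈ SS (8/5) := by
  have h0 := one_sub_slit hu
  have hn : ‖u‖ < 1 := by simpa using hu
  have h2 : ‖1 - u‖ < 2 := by
    calc ‖1 - u‖ ≤ ‖(1:ℂ)‖ + ‖u‖ := norm_sub_le _ _
      _ < 2 := by simp; linarith
  have hpos : 0 < ‖1 - u‖ := by
    rw [norm_pos_iff]; intro h; rw [h] at h0; simp at h0
  constructor
  · simp only [neg_re, log_re]
    have : Real.log ‖1-u‖ ≤ ‖1 - u‖ - 1 := Real.log_le_sub_one_of_pos hpos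
    linarith
  · simp only [neg_im, abs_neg, log_im]
    have : |arg (1 - u)| < Real.pi / 2 := abs_arg_lt_pi_div_two_iff.2 (Or.inl h0)
    have := Real.pi_lt_d2
    linarith

theorem log_hasDeriv {u : ℂ} (hu : u ∈ Metric.ball (0:ℂ) 1) :
    HasDerivAt (fun u => -log (1 - u)) (1 - u)⁻¹ u := by
  have h := ((hasDerivAt_id u).const_sub 1).clog (Or.inl (one_sub_slit hu))
  exact h.fun_neg.congr_deriv (by simp [neg_div])

theorem comp_iter {G : ℂ → ℂ} (hG : DifferentiableOn ℂ G (SS (8/5))) (k : ℕ) :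
    ∀ u ∈ Metric.ball (0:ℂ) 1, iteratedDeriv k (fun u => G (-log (1 - u))) u
      = (1 - u)⁻¹ ^ k * ∑ l ∈ Finset.range (k + 1),
          (stirling1Unsigned k l : ℂ) * iteratedDeriv l G (-log (1 - u)) := by
  have hA : AnalyticOnNhd ℂ G (SS (8/5)) := hG.analyticOnNhd (SS_open _)
  induction k with
  | zero => intro u hu; simp [stirling1Unsigned]
  | succ k ih =>
    intro u hu
    have hev : iteratedDeriv k (fun u => G (-log (1 - u))) =ᶠ[nhds u] fun u =>
      (1 - u)⁻¹ ^ k * ∑ l ∈ Finset.range (k + 1),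
          (stirling1Unsigned k l : ℂ) * iteratedDeriv l G (-log (1 - u)) := by
      filter_upwards [Metric.isOpen_ball.mem_nhds hu] with z hz using ih z hz
    rw [iteratedDeriv_succ, hev.deriv_eq]
    have hne : 1 - u ≠ 0 := by
      intro h; have := one_sub_slit hu; rw [h] at this; simp at this
    have hd : ∀ l, HasDerivAt (fun u => iteratedDeriv l G (-log (1 - u)))
        (iteratedDeriv (l+1) G (-log (1-u)) * (1-u)⁻¹) u := by
      intro l
      have h1 : DifferentiableAt ℂ (iteratedDeriv l G) (-log (1 - u)) := by
        rw [iteratedDeriv_eq_iterate]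
        exact (hA.iterated_deriv l _ (log_mem hu)).differentiableAt
      have := h1.hasDerivAt.comp u (log_hasDeriv hu)
      rw [iteratedDeriv_succ]
      exact this
    have hs : HasDerivAt (fun u => ∑ l ∈ Finset.range (k + 1),
          (stirling1Unsigned k l : ℂ) * iteratedDeriv l G (-log (1 - u)))
          (∑ l ∈ Finset.range (k + 1),
          (stirling1Unsigned k l : ℂ) * (iteratedDeriv (l+1) G (-log (1 - u)) * (1-u)⁻¹)) u :=
      HasDerivAt.fun_sum fun l _ => (hd l).const_mul _
    have hinv : HasDerivAt (fun u : ℂ => (1 - u)⁻¹ ^ k) (k * (1-u)⁻¹ ^ (k+1)) u := by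
      have h1 : HasDerivAt (fun u : ℂ => (1 - u)⁻¹) ((1-u)⁻¹ ^ 2) u := by
        exact (((hasDerivAt_id u).const_sub 1).fun_inv hne).congr_deriv (by simp)
      refine (h1.fun_pow k).congr_deriv ?_
      rcases k with _ | k
      · simp
      · generalize (1 - u)⁻¹ = q
        push_cast [Nat.add_sub_cancel]; ring
    have := (hinv.mul hs).deriv
    rw [show (fun u : ℂ => (1 - u)⁻¹ ^ k * ∑ l ∈ Finset.range (k + 1),
          (stirling1Unsigned k l : ℂ) * iteratedDeriv l G (-log (1 - u))) = (fun u : ℂ => (1 - u)⁻¹ ^ k) * (fun u => ∑ l ∈ Finset.range (k + 1),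
          (stirling1Unsigned k l : ℂ) * iteratedDeriv l G (-log (1 - u))) from rfl, this]
    rw [Finset.sum_range_succ' _ (k+1)]
    rw [st_succ_zero]
    simp only [stirling1Unsigned, Nat.cast_add, add_mul, Finset.sum_add_distrib]
    have e2 : ∑ x ∈ Finset.range (k + 1), ((k * stirling1Unsigned k (x + 1) : ℕ) : ℂ) *
      iteratedDeriv (x + 1) G (-log (1 - u)) = k * ∑ l ∈ Finset.range (k + 1),
          (stirling1Unsigned k l : ℂ) * iteratedDeriv l G (-log (1 - u)) := by
      rw [Finset.sum_range_succ, st_zero k (k+1) (by omega), Finset.sum_range_succ' _ k, mul_add,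
        Finset.mul_sum]
      have : (k:ℂ) * ((stirling1Unsigned k 0 : ℂ) * iteratedDeriv 0 G (-log (1 - u))) = 0 := by
        rcases k with _ | k
        · simp
        · rw [st_succ_zero]; simp
      rw [this]
      simp [mul_assoc]
    rw [e2]
    simp only [← mul_assoc, ← Finset.sum_mul]
    generalize (1 - u)⁻¹ = q
    simp only [Nat.cast_zero, zero_mul, add_zero]
    ring
end

section
open Complex

theorem SS_ball {t : ℂ} {r r' δ : ℝ} (ht : t ∈ SS r) (h : r + δ < r') :
    Metric.closedBall t δ ⊆ SS r' := by
  intro z hz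
  have h1 : ‖z - t‖ ≤ δ := by simpa [dist_eq_norm] using hz
  have h2 := abs_le.1 ((abs_re_le_norm (z - t)).trans h1)
  have h3 := (abs_im_le_norm (z - t)).trans h1
  simp only [sub_re, sub_im] at h2 h3
  have h4 := ht.2
  have : |z.im| ≤ |z.im - t.im| + |t.im| := by
    have := abs_add_le (z.im - t.im) t.im; simpa using this
  exact ⟨by have := ht.1; linarith [h2.1], by linarith⟩

theorem cauchy_SS {G : ℂ → ℂ} {r r' δ ε C : ℝ} (hδ : 0 < δ) (h : r + δ < r') (hε : 0 ≤ ε)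
    (hG : DifferentiableOn ℂ G (SS r')) (hC : 0 ≤ C)
    (hb : ∀ t ∈ SS r', ‖G t‖ ≤ C * Real.exp (ε * t.re)) :
    ∀ t ∈ SS r, ‖deriv G t‖ ≤ (C * Real.exp (ε * δ) / δ) * Real.exp (ε * t.re) := by
  intro t ht
  have hsub := SS_ball ht h
  have := Complex.norm_deriv_le_of_forall_mem_sphere_norm_le (c := t) (f := G) hδ
    (C := C * Real.exp (ε * (t.re + δ))) ?_ ?_
  · refine this.trans (le_of_eq ?_)
    rw [mul_add, Real.exp_add]; ring
  · exact (hG.mono (Metric.closure_ball_subset_closedBall.trans hsub)).diffContOnCl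
  · intro z hz
    have hz' := Metric.sphere_subset_closedBall hz
    refine (hb z (hsub hz')).trans ?_
    have h1 : ‖z - t‖ ≤ δ := by simpa [dist_eq_norm] using hz'
    have h2 := abs_le.1 ((abs_re_le_norm (z - t)).trans h1)
    simp only [sub_re] at h2
    gcongr
    linarith [h2.2]

theorem circle_lower {r θ : ℝ} (hr : 1/2 ≤ r) (hθ : |θ| ≤ Real.pi) :
    |θ| / 3 ≤ ‖1 - circleMap 0 r θ‖ := by
  have h1 : ‖1 - circleMap 0 r θ‖ ^ 2 = (1 - r)^2 + 2 * r * (1 - Real.cos θ) := by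
    rw [← normSq_eq_norm_sq, normSq_apply]
    simp [circleMap, exp_ofReal_mul_I_re, exp_ofReal_mul_I_im]
    nlinarith [Real.sin_sq_add_cos_sq θ]
  have h2 := Real.cos_le_one_sub_mul_cos_sq hθ
  have hpi := Real.pi_lt_d2
  refine le_of_sq_le_sq ?_ (norm_nonneg _)
  rw [h1, div_pow, sq_abs]
  have h3 : θ^2 / 9 ≤ 1 - Real.cos θ := by
    have : θ ^2/9 ≤ 2 / Real.pi^2 * θ^2 := by
      rw [div_eq_inv_mul]
      gcongr
      rw [inv_eq_one_div, div_le_div_iff₀ (by norm_num) (by positivity)]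
      nlinarith [Real.pi_pos]
    linarith
  nlinarith [sq_nonneg (1-r), Real.cos_le_one θ]

theorem circle_lower' {r θ ε : ℝ} (hr : 1/2 ≤ r) (hr1 : r < 1) (h0 : 0 < θ) (h1 : θ < 2 * Real.pi)
    (hε : 0 < ε) (hε1 : ε < 1) :
    ‖1 - circleMap 0 r θ‖ ^ (-ε) * ‖1 - circleMap 0 r θ‖⁻¹ ≤
      (1 - r)⁻¹ ^ (2 * ε) * (3 * (θ ^ (ε - 1) + (2 * Real.pi - θ) ^ (ε - 1))) := by
  set ρ := ‖1 - circleMap 0 r θ‖ with hρ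
  have a1 : 1 - r ≤ ρ := by
    have := norm_sub_norm_le (1:ℂ) (circleMap 0 r θ)
    simp [abs_of_nonneg (show 0 ≤ r by linarith)] at this
    linarith
  have hρ0 : 0 < ρ := by linarith
  have key : ∀ η : ℝ, 0 < η → η / 3 ≤ ρ → ρ ^ (ε - 1) ≤ 3 * η ^ (ε - 1) := by
    intro η hη h
    calc ρ ^ (ε - 1) ≤ (η/3) ^ (ε - 1) :=
          Real.rpow_le_rpow_of_nonpos (by positivity) h (by linarith)
      _ = 3 ^ (1 - ε) * η ^ (ε - 1) := by
          rw [Real.div_rpow hη.le (by norm_num), show ε - 1 = -(1 - ε) by ring,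
            Real.rpow_neg (by norm_num : (0:ℝ) ≤ 3)]
          field_simp
      _ ≤ 3 ^ (1:ℝ) * η ^ (ε - 1) := by
          gcongr
          · norm_num
          · linarith
      _ = _ := by simp
  have a2 : ρ ^ (ε - 1) ≤ 3 * (θ ^ (ε - 1) + (2 * Real.pi - θ) ^ (ε - 1)) := by
    have p1 : 0 ≤ θ ^ (ε - 1) := by positivity
    have p2 : 0 ≤ (2 * Real.pi - θ) ^ (ε - 1) := Real.rpow_nonneg (by linarith) _
    rcases le_total θ Real.pi with h | h
    · have := circle_lower hr (θ := θ) (by rw [abs_of_pos h0]; exact h)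
      rw [abs_of_pos h0] at this
      have := key θ h0 this
      linarith
    · have := circle_lower hr (θ := θ - 2 * Real.pi) (by rw [abs_of_neg (by linarith)]; linarith)
      rw [abs_of_neg (by linarith)] at this
      have e : circleMap 0 r (θ - 2 * Real.pi) = circleMap 0 r θ := by
        have := periodic_circleMap 0 r (θ - 2 * Real.pi)
        rw [← this]; congr 1; ring
      rw [e] at this
      have := key (2 * Real.pi - θ) (by linarith) (by rw [← hρ] at this; linarith)
      linarith
  have a3 : ρ ^ (-ε) * ρ⁻¹ = (ρ⁻¹) ^ (2 * ε) * ρ ^ (ε - 1) := by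
    rw [Real.inv_rpow hρ0.le, ← Real.rpow_neg hρ0.le, ← Real.rpow_add hρ0, ← Real.rpow_neg_one,
      ← Real.rpow_add hρ0]
    congr 1; ring
  rw [a3]
  have : 0 < 1 - r := by linarith
  gcongr
end

section
open Complex

theorem int_D {ε : ℝ} (hε : 0 < ε) : IntervalIntegrable
    (fun θ : ℝ => 3 * (θ ^ (ε - 1) + (2 * Real.pi - θ) ^ (ε - 1))) MeasureTheory.volume 0 (2 * Real.pi) := by
  have h1 : IntervalIntegrable (fun θ : ℝ => θ ^ (ε - 1)) MeasureTheory.volume 0 (2 * Real.pi) :=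
    intervalIntegral.intervalIntegrable_rpow' (by linarith)
  have h2 := h1.comp_sub_left (2 * Real.pi)
  simp only [sub_zero, sub_self] at h2
  exact (h1.add h2.symm).const_mul 3

theorem exp_log_re {u : ℂ} (hu : u ∈ Metric.ball (0:ℂ) 1) (ε : ℝ) :
    Real.exp (ε * (-log (1 - u)).re) = ‖1 - u‖ ^ (-ε) := by
  have h0 := one_sub_slit hu
  have hp : 0 < ‖1 - u‖ := norm_pos_iff.2 (by intro h; rw [h] at h0; simp at h0)
  rw [neg_re, log_re, Real.rpow_def_of_pos hp]; congr 1; ring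

theorem iter_cauchy {f : ℂ → ℂ} {R : ℝ} (hR : 0 < R) (hf : DifferentiableOn ℂ f (Metric.closedBall 0 R))
    (k : ℕ) : ‖iteratedDeriv k f 0‖ ≤ k.factorial *
      (((2 * Real.pi)⁻¹ * ∫ θ in (0:ℝ)..2 * Real.pi, ‖f (circleMap 0 R θ)‖) * R⁻¹ ^ k) := by
  lift R to NNReal using hR.le
  have h := hf.hasFPowerSeriesOnBall (by exact_mod_cast hR)
  have h1 := h.factorial_smul (1:ℂ) k
  rw [iteratedDeriv_eq_iteratedFDeriv]
  rw [← h1]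
  rw [nsmul_eq_mul, norm_mul]
  simp only [Complex.norm_natCast]
  gcongr
  refine (ContinuousMultilinearMap.le_opNorm _ _).trans ?_
  simp only [norm_one, Finset.prod_const_one, mul_one]
  have := norm_cauchyPowerSeries_le f 0 R k
  simpa using this

theorem coef_bound {ε : ℝ} (hε : 0 < ε) (hε1 : ε < 1) : ∃ D : ℝ, 0 ≤ D ∧ ∀ (G : ℂ → ℂ) (C : ℝ),
    DifferentiableOn ℂ G (SS 2) → (∀ t ∈ SS 2, ‖G t‖ ≤ C * Real.exp (ε * t.re)) → ∀ k : ℕ,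
    ‖∑ l ∈ Finset.range (k + 2), (stirling1Unsigned (k + 1) l : ℂ) * iteratedDeriv l G 0‖
      ≤ C * D * k.factorial * ((k:ℝ) + 2) ^ (2 * ε) := by
  set J := ∫ θ in (0:ℝ)..2 * Real.pi, 3 * (θ ^ (ε - 1) + (2 * Real.pi - θ) ^ (ε - 1)) with hJ
  have hJ0 : 0 ≤ J := by
    refine intervalIntegral.integral_nonneg (by positivity) fun θ hθ => ?_
    have := Real.rpow_nonneg hθ.1 (ε - 1)
    have := Real.rpow_nonneg (sub_nonneg.2 hθ.2) (ε - 1)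
    linarith
  set A := Real.exp (ε * (3/10)) / (3/10) with hA
  refine ⟨A * ((2 * Real.pi)⁻¹ * J * 3), by positivity, fun G C hG hb k => ?_⟩
  have hC : 0 ≤ C := by
    have := (norm_nonneg _).trans (hb 0 (SS_zero (by norm_num)))
    simpa using this
  have hG' : DifferentiableOn ℂ G (SS (8/5)) := hG.mono (SS_mono (by norm_num))
  have hd := cauchy_SS (r := 8/5) (δ := 3/10) (by norm_num) (by norm_num) hε.le hG hC hb
  have h1 := comp_iter hG' (k + 1) 0 (by simp)
  simp only [sub_zero, inv_one, one_pow, one_mul, log_one, neg_zero] at h1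
  rw [← h1, iteratedDeriv_succ']
  set H := fun u => G (-log (1 - u)) with hH
  have hHd : ∀ u ∈ Metric.ball (0:ℂ) 1, HasDerivAt H (deriv G (-log (1 - u)) * (1 - u)⁻¹) u := by
    intro u hu
    have := (hG'.differentiableAt ((SS_open _).mem_nhds (log_mem hu))).hasDerivAt
    exact HasDerivAt.comp u this (log_hasDeriv hu)
  have hdd : DifferentiableOn ℂ (deriv H) (Metric.ball 0 1) := by
    have : DifferentiableOn ℂ H (Metric.ball 0 1) := fun u hu =>
      (hHd u hu).differentiableAt.differentiableWithinAt
    exact this.deriv Metric.isOpen_ball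
  set r : ℝ := (k + 1) / (k + 2) with hr
  have hr0 : 1/2 ≤ r := by rw [hr, div_le_div_iff₀ (by norm_num) (by positivity)]; linarith [k.cast_nonneg (α := ℝ)]
  have hr1 : r < 1 := by rw [hr, div_lt_one (by positivity)]; linarith
  have hsub : Metric.closedBall (0:ℂ) r ⊆ Metric.ball 0 1 := Metric.closedBall_subset_ball hr1
  refine (iter_cauchy (R := r) (by linarith) (hdd.mono hsub) k).trans ?_
  have e1 : (1 - r)⁻¹ = (k:ℝ) + 2 := by rw [hr]; field_simp; ring
  have hI : (∫ θ in (0:ℝ)..2 * Real.pi, ‖deriv H (circleMap 0 r θ)‖) ≤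
      C * A * (((k:ℝ) + 2) ^ (2 * ε) * J) := by
    rw [hJ, ← intervalIntegral.integral_const_mul, ← intervalIntegral.integral_const_mul]
    have hcm : ∀ θ, circleMap 0 r θ ∈ Metric.ball (0:ℂ) 1 := fun θ =>
      hsub (circleMap_mem_closedBall _ (by linarith) θ)
    refine intervalIntegral.integral_mono_on_of_le_Ioo (by positivity) ?_ ?_ ?_
    · refine Continuous.intervalIntegrable ?_ _ _
      refine (hdd.continuousOn.comp_continuous (continuous_circleMap 0 r) hcm).norm
    · exact (((int_D hε).const_mul _).const_mul _)
    · intro θ hθ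
      rw [(hHd _ (hcm θ)).deriv, norm_mul]
      have b1 := hd _ (log_mem (hcm θ))
      rw [exp_log_re (hcm θ)] at b1
      have b2 := circle_lower' hr0 hr1 hθ.1 hθ.2 hε hε1
      rw [e1] at b2
      calc _ ≤ C * Real.exp (ε * (3 / 10)) / (3 / 10) * ‖1 - circleMap 0 r θ‖ ^ (-ε) * ‖(1 - circleMap 0 r θ)⁻¹‖ := by gcongr
        _ = C * A * (‖1 - circleMap 0 r θ‖ ^ (-ε) * ‖1 - circleMap 0 r θ‖⁻¹) := by
            rw [norm_inv, hA]; ring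
        _ ≤ _ := by gcongr
  have hrk : r⁻¹ ^ k ≤ 3 := by
    have : r⁻¹ = 1 / ((k:ℝ) + 1) + 1 := by rw [hr]; field_simp; ring
    rw [this]
    have h2 := Real.add_one_le_exp (1 / ((k:ℝ)+1))
    calc (1 / ((k:ℝ) + 1) + 1) ^ k ≤ Real.exp (1 / ((k:ℝ)+1)) ^ k := by gcongr
      _ = Real.exp (k * (1 / ((k:ℝ)+1))) := by rw [Real.exp_nat_mul]
      _ ≤ Real.exp 1 := by
          gcongr
          rw [mul_one_div, div_le_one (by positivity)]; linarith
      _ ≤ 3 := by linarith [Real.exp_one_lt_d9]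
  calc _ ≤ (k.factorial : ℝ) * (((2 * Real.pi)⁻¹ * (C * A * (((k:ℝ) + 2) ^ (2 * ε) * J))) * 3) := by
        gcongr
    _ = _ := by ring
end

section
open Complex

noncomputable def tc (F : ℂ → ℂ) (j : ℕ) : ℂ := iteratedDeriv j F 0 / (j.factorial : ℂ)

theorem fac_ne (j : ℕ) : (j.factorial : ℂ) ≠ 0 := by exact_mod_cast j.factorial_ne_zero

theorem iter_eq_tc (F : ℂ → ℂ) (j : ℕ) : iteratedDeriv j F 0 = j.factorial * tc F j := by
  rw [tc]; field_simp [fac_ne j]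

theorem tc_mul {F G : ℂ → ℂ} (hF : AnalyticAt ℂ F 0) (hG : AnalyticAt ℂ G 0) (n : ℕ) :
    tc (fun t => F t * G t) n = ∑ i ∈ Finset.range (n + 1), tc F i * tc G (n - i) := by
  have := iteratedDeriv_mul (n := n) hF.contDiffAt hG.contDiffAt
  change iteratedDeriv n (fun t => F t * G t) 0 = _ at this
  rw [tc, this, Finset.sum_div]
  refine Finset.sum_congr rfl fun i hi => ?_
  have hi' : i ≤ n := by simpa [Nat.lt_succ_iff] using hi
  rw [tc, tc, Nat.cast_choose ℂ hi']
  have := fac_ne n; have := fac_ne i; have := fac_ne (n - i)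
  field_simp

theorem tc_congr {F G : ℂ → ℂ} (h : F =ᶠ[nhds 0] G) (n : ℕ) : tc F n = tc G n := by
  rw [tc, tc, h.iteratedDeriv_eq]

theorem tc_id (n : ℕ) : tc (fun t => t) n = if n = 1 then 1 else 0 := by
  rcases n with _ | _ | n
  · simp [tc]
  · simp [tc]
  · have : iteratedDeriv (n + 2) (fun t : ℂ => t) = 0 := by
      rw [iteratedDeriv_succ', iteratedDeriv_succ']
      simp only [deriv_id'', deriv_const']
      ext; simp
    simp [tc, this]

theorem tc_mulX_succ {F : ℂ → ℂ} (hF : AnalyticAt ℂ F 0) (n : ℕ) :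
    tc (fun t => t * F t) (n + 1) = tc F n := by
  rw [tc_mul (F := fun t => t) analyticAt_id hF]
  rw [Finset.sum_eq_single 1]
  · simp [tc_id]
  · intro b _ hb
    simp [tc_id, hb]
  · intro h; simp at h

theorem tc_mulX_zero (F : ℂ → ℂ) : tc (fun t => t * F t) 0 = 0 := by simp [tc]

theorem tc_pow {F : ℂ → ℂ} (hF : AnalyticAt ℂ F 0) (p : ℕ) :
    (∀ j, tc (fun t => t ^ p * F t) (p + j) = tc F j) ∧ ∀ l < p, tc (fun t => t ^ p * F t) l = 0 := by
  induction p with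
  | zero => simp
  | succ p ih =>
    have hA : AnalyticAt ℂ (fun t => t ^ p * F t) 0 := (analyticAt_id.pow p).mul hF
    have e : (fun t => t ^ (p+1) * F t) = fun t => t * (t ^ p * F t) := by ext; ring
    rw [e]
    refine ⟨fun j => ?_, fun l hl => ?_⟩
    · rw [show p + 1 + j = (p + j) + 1 by ring, tc_mulX_succ hA, ih.1]
    · rcases l with _ | l
      · exact tc_mulX_zero _
      · rw [tc_mulX_succ hA, ih.2 l (by omega)]

theorem tc_add {F G : ℂ → ℂ} (hF : AnalyticAt ℂ F 0) (hG : AnalyticAt ℂ G 0) (n : ℕ) :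
    tc (fun t => F t + G t) n = tc F n + tc G n := by
  rw [tc, iteratedDeriv_fun_add hF.contDiffAt hG.contDiffAt, add_div]; rfl

theorem tc_smul {F : ℂ → ℂ} (hF : AnalyticAt ℂ F 0) (c : ℂ) (n : ℕ) :
    tc (fun t => c * F t) n = c * tc F n := by
  rw [tc, iteratedDeriv_const_mul c hF.contDiffAt, mul_div_assoc]; rfl

theorem tc_deriv (F : ℂ → ℂ) (n : ℕ) : tc (deriv F) n = (n + 1) * tc F (n + 1) := by
  rw [tc, tc, ← iteratedDeriv_succ', Nat.factorial_succ]
  have := fac_ne n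
  have h2 : (n:ℂ) + 1 ≠ 0 := by exact_mod_cast n.succ_ne_zero
  push_cast; field_simp

theorem iter_scale {F : ℂ → ℂ} {v : ℂ} (n : ℕ) :
    iteratedDeriv n (fun t => F (v * t)) = fun t => v ^ n * iteratedDeriv n F (v * t) := by
  induction n with
  | zero => simp
  | succ n ih =>
    rw [iteratedDeriv_succ, ih]
    ext t
    rw [deriv_const_mul_field]
    have := deriv_comp_mul_left v (iteratedDeriv n F) t
    rw [this, iteratedDeriv_succ, smul_eq_mul]; ring

theorem tc_scale (F : ℂ → ℂ) (v : ℂ) (n : ℕ) : tc (fun t => F (v * t)) n = v ^ n * tc F n := by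
  rw [tc, iter_scale]; simp [tc, mul_div_assoc]

theorem tc_shift {F : ℂ → ℂ} (hF : AnalyticAt ℂ F 0) (hD : AnalyticAt ℂ (dslope F 0) 0) (n : ℕ) :
    tc (dslope F 0) n = tc F (n + 1) := by
  rw [← tc_mulX_succ hD]
  have e : (fun t => t * dslope F 0 t) = fun t => F t + (-F 0) := by
    ext t
    have := sub_smul_dslope F 0 t
    simp at this
    rw [this]; ring
  rw [e, tc_add hF analyticAt_const]
  have : tc (fun _ => -F 0) (n + 1) = 0 := by
    simp [tc, iteratedDeriv_succ']
  rw [this, add_zero]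

theorem pow_bound (p : ℕ) {ε : ℝ} (hε : 0 < ε) (r : ℝ) :
    ∃ C : ℝ, 0 ≤ C ∧ ∀ t ∈ SS r, ‖t‖ ^ p ≤ C * Real.exp (ε * t.re) := by
  refine ⟨p.factorial * Real.exp (3 * r * ε) / ε ^ p, by positivity, fun t ht => ?_⟩
  obtain ⟨h1, h2⟩ := ht
  have hn : ‖t‖ ≤ t.re + 3 * r := by
    have := norm_le_abs_re_add_abs_im t
    have : |t.re| ≤ t.re + 2 * r := by
      have := abs_nonneg t.im
      rcases abs_cases t.re with h | h <;> linarith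
    linarith
  have h0 : 0 ≤ t.re + 3 * r := (norm_nonneg _).trans hn
  have := Real.pow_div_factorial_le_exp (ε * (t.re + 3 * r)) (by positivity) p
  rw [div_le_iff₀ (by positivity), mul_pow] at this
  rw [div_mul_eq_mul_div, le_div_iff₀ (by positivity)]
  calc ‖t‖ ^ p * ε ^ p ≤ (t.re + 3 * r) ^ p * ε ^ p := by gcongr
    _ ≤ Real.exp (ε * (t.re + 3 * r)) * p.factorial := by linarith
    _ = _ := by rw [mul_add, Real.exp_add, show ε * (3 * r) = 3 * r * ε by ring]; ring

def Bdd (F : ℂ → ℂ) (r : ℝ) : Prop :=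
  DifferentiableOn ℂ F (SS r) ∧ ∀ ε : ℝ, 0 < ε → ∃ C : ℝ, 0 ≤ C ∧ ∀ t ∈ SS r, ‖F t‖ ≤ C * Real.exp (ε * t.re)

def Cls (φ : ℕ → ℂ) : Prop := ∃ r : ℝ, 2 < r ∧ ∃ F : ℂ → ℂ, Bdd F r ∧ ∀ j, tc F j = φ j

theorem Bdd.an {F : ℂ → ℂ} {r : ℝ} (h : Bdd F r) (hr : 2 < r) : AnalyticAt ℂ F 0 :=
  h.1.analyticAt ((SS_open r).mem_nhds (SS_zero (by linarith)))

theorem Bdd.mono {F : ℂ → ℂ} {r r' : ℝ} (h : Bdd F r) (hr : r' ≤ r) : Bdd F r' := by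
  refine ⟨h.1.mono (SS_mono hr), fun ε hε => ?_⟩
  obtain ⟨C, h0, hC⟩ := h.2 ε hε
  exact ⟨C, h0, fun t ht => hC t (SS_mono hr ht)⟩

theorem Bdd.add {F G : ℂ → ℂ} {r : ℝ} (hF : Bdd F r) (hG : Bdd G r) : Bdd (fun t => F t + G t) r := by
  refine ⟨hF.1.add hG.1, fun ε hε => ?_⟩
  obtain ⟨C, h0, hC⟩ := hF.2 ε hε
  obtain ⟨C', h0', hC'⟩ := hG.2 ε hε
  refine ⟨C + C', by positivity, fun t ht => ?_⟩
  rw [add_mul]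
  exact (norm_add_le _ _).trans (add_le_add (hC t ht) (hC' t ht))

theorem Bdd.mul {F G : ℂ → ℂ} {r : ℝ} (hF : Bdd F r) (hG : Bdd G r) : Bdd (fun t => F t * G t) r := by
  refine ⟨hF.1.mul hG.1, fun ε hε => ?_⟩
  obtain ⟨C, h0, hC⟩ := hF.2 (ε/2) (by positivity)
  obtain ⟨C', h0', hC'⟩ := hG.2 (ε/2) (by positivity)
  refine ⟨C * C', by positivity, fun t ht => ?_⟩
  rw [norm_mul]
  refine (mul_le_mul (hC t ht) (hC' t ht) (norm_nonneg _) (by positivity)).trans (le_of_eq ?_)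
  rw [show ε * t.re = ε/2 * t.re + ε/2*t.re by ring, Real.exp_add]; ring

theorem Bdd_pow (p : ℕ) (r : ℝ) : Bdd (fun t => t ^ p) r := by
  refine ⟨by fun_prop, fun ε hε => ?_⟩
  obtain ⟨C, h0, hC⟩ := pow_bound p hε r
  exact ⟨C, h0, fun t ht => by rw [norm_pow]; exact hC t ht⟩

theorem Bdd_const (c : ℂ) (r : ℝ) : Bdd (fun _ => c) r := by
  refine ⟨by fun_prop, fun ε hε => ?_⟩
  obtain ⟨C, h0, hC⟩ := pow_bound 0 hε r
  refine ⟨‖c‖ * C, by positivity, fun t ht => ?_⟩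
  have := hC t ht
  simp only [pow_zero] at this
  nlinarith [norm_nonneg c]

theorem Bdd.deriv {F : ℂ → ℂ} {r r' : ℝ} (h : Bdd F r) (hr : r' < r) : Bdd (deriv F) r' := by
  refine ⟨(h.1.deriv (SS_open r)).mono (SS_mono hr.le), fun ε hε => ?_⟩
  obtain ⟨C, h0, hC⟩ := h.2 ε hε
  exact ⟨_, by have : 0 < r - r' := by linarith
               positivity, cauchy_SS (δ := (r - r')/2) (by linarith) (by linarith) hε.le h.1 h0 hC⟩

theorem Bdd.shift {F : ℂ → ℂ} {r : ℝ} (h : Bdd F r) (hr : 2 < r) : Bdd (dslope F 0) r := by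
  have hn : SS r ∈ nhds (0:ℂ) := (SS_open r).mem_nhds (SS_zero (by linarith))
  have hd : DifferentiableOn ℂ (dslope F 0) (SS r) := (Complex.differentiableOn_dslope hn).2 h.1
  refine ⟨hd, fun ε hε => ?_⟩
  have h1 := h.add (Bdd_const (-F 0) r)
  obtain ⟨C, h0, hC⟩ := h1.2 ε hε
  have hsub : Metric.closedBall (0:ℂ) 1 ⊆ SS r := SS_ball (SS_zero (r := 1/2) (by norm_num)) (by linarith)
  obtain ⟨K, hK⟩ := (isCompact_closedBall (0:ℂ) 1).exists_bound_of_continuousOn (hd.continuousOn.mono hsub)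
  have hK0 : 0 ≤ K := (norm_nonneg _).trans (hK 0 (by simp))
  obtain ⟨A, hA0, hA⟩ := pow_bound 0 hε r
  refine ⟨C + K * A, by positivity, fun t ht => ?_⟩
  by_cases hb : t ∈ Metric.closedBall (0:ℂ) 1
  · have a1 := hK t hb
    have a2 := hA t ht
    simp only [pow_zero] at a2
    have : 0 ≤ C * Real.exp (ε * t.re) := by positivity
    nlinarith
  · have hb' : 1 < ‖t‖ := by simpa using hb
    have e := sub_smul_dslope F 0 t
    have e2 : ‖F t + -F 0‖ ≤ _ := hC t ht
    simp only [sub_zero, smul_eq_mul] at e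
    rw [← sub_eq_add_neg, ← e, norm_mul] at e2
    have : 0 ≤ K * A * Real.exp (ε * t.re) := by positivity
    nlinarith [norm_nonneg (dslope F 0 t)]

theorem Cls.shift {φ : ℕ → ℂ} (h : Cls φ) : Cls (fun j => φ (j + 1)) := by
  obtain ⟨r, hr, F, hF, hj⟩ := h
  refine ⟨r, hr, dslope F 0, hF.shift hr, fun j => ?_⟩
  rw [tc_shift (hF.an hr) ((hF.shift hr).an hr), hj]

theorem Cls.theta {φ : ℕ → ℂ} (h : Cls φ) (a : ℂ) : Cls (fun j => (1 + a * j) * φ j) := by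
  obtain ⟨r, hr, F, hF, hj⟩ := h
  have hr' : (r + 2)/2 < r := by linarith
  have hr2 : 2 < (r + 2)/2 := by linarith
  have hd := hF.deriv hr'
  have hX : Bdd (fun t => t * deriv F t) ((r+2)/2) := by
    have := (Bdd_pow 1 ((r+2)/2)).mul hd
    simpa using this
  have hX2 : Bdd (fun t => a * (t * deriv F t)) ((r+2)/2) := (Bdd_const a _).mul hX
  refine ⟨(r+2)/2, hr2, _, (hF.mono hr'.le).add hX2, fun j => ?_⟩
  rw [tc_add (hF.an hr) (hX2.an hr2), tc_smul (hX.an hr2), hj]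
  rcases j with _ | j
  · rw [tc_mulX_zero]; simp
  · rw [tc_mulX_succ (hd.an hr2), tc_deriv, hj]; push_cast; ring

noncomputable def poch (a : ℂ) (j : ℕ) : ℂ := ∏ i ∈ Finset.range j, (a + i)

theorem poch_step (a : ℂ) (j : ℕ) : a * poch (a + 1) j = (a + j) * poch a j := by
  have h1 : poch a (j+1) = (a + j) * poch a j := by rw [poch, Finset.prod_range_succ, poch]; ring
  rw [← h1, poch, poch, Finset.prod_range_succ']
  simp only [Nat.cast_add, Nat.cast_one, Nat.cast_zero, add_zero]
  rw [mul_comm]; congr 1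
  exact Finset.prod_congr rfl fun i _ => by ring

theorem poch_one (j : ℕ) : poch 1 j = j.factorial := by
  rw [poch, ← Finset.prod_range_add_one_eq_factorial]; push_cast
  exact Finset.prod_congr rfl fun i _ => by ring

theorem Cls.poch {φ : ℕ → ℂ} (h : Cls φ) (L : ℕ) :
    Cls (fun j => poch ((L + 1 : ℕ) : ℂ) j / j.factorial * φ j) := by
  induction L with
  | zero =>
    convert h using 2 with j
    simp only [zero_add, Nat.cast_one, poch_one]
    rw [div_self (fac_ne j), one_mul]
  | succ L ih =>
    convert ih.theta (1 / ((L + 1 : ℕ) : ℂ)) using 2 with j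
    have h0 : ((L + 1 : ℕ) : ℂ) ≠ 0 := by exact_mod_cast L.succ_ne_zero
    have := poch_step ((L + 1 : ℕ) : ℂ) j
    have e : _root_.poch ((L + 1 + 1 : ℕ) : ℂ) j = (((L + 1 : ℕ) : ℂ) + j) * _root_.poch ((L + 1 : ℕ) : ℂ) j / ((L + 1 : ℕ) : ℂ) := by
      rw [eq_div_iff h0, ← this]; push_cast; ring
    rw [e]
    have := fac_ne j
    field_simp
end

section
open Complex

noncomputable def EE : ℂ → ℂ := dslope exp 0

theorem EE_diff : Differentiable ℂ EE := by
  rw [← differentiableOn_univ]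
  exact (Complex.differentiableOn_dslope Filter.univ_mem).2 differentiable_exp.differentiableOn

theorem EE_mul (t : ℂ) : t * EE t = exp t - 1 := by
  have := sub_smul_dslope exp 0 t
  simpa [EE] using this

theorem EE_ne {t : ℂ} (ht : t ∈ SS 4) : EE t ≠ 0 := by
  by_cases h0 : t = 0
  · subst h0; simp [EE, dslope_same]
  · intro h
    have h1 := EE_mul t
    rw [h, mul_zero] at h1
    obtain ⟨n, hn⟩ := exp_eq_one_iff.1 (sub_eq_zero.1 h1.symm)
    have him : t.im = n * (2 * Real.pi) := by rw [hn]; simp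
    have := ht.2
    rw [him, abs_mul, abs_of_pos (by positivity : 0 < 2 * Real.pi)] at this
    have hn0 : n ≠ 0 := by rintro rfl; simp at hn; exact h0 hn
    have h3 : (1:ℝ) ≤ |(n:ℝ)| := by exact_mod_cast Int.one_le_abs hn0
    nlinarith [Real.pi_gt_three]

noncomputable def FB (b : ℝ) (t : ℂ) : ℂ := exp (b * t) / EE t

theorem FB_diff (b : ℝ) : DifferentiableOn ℂ (FB b) (SS 4) := by
  intro t ht
  refine DifferentiableAt.differentiableWithinAt ?_
  exact DifferentiableAt.div (by fun_prop) (EE_diff t) (EE_ne ht)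

theorem FB_Bdd {b : ℝ} (hb1 : b < 1) : Bdd (FB b) 3 := by
  refine ⟨(FB_diff b).mono (SS_mono (by norm_num)), fun ε hε => ?_⟩
  set S : Set ℂ := Set.Icc (-3) 1 ×ℂ Set.Icc (-3) 3 with hS
  have hSS : S ⊆ SS 4 := by
    intro t ht
    rw [hS, mem_reProdIm] at ht
    refine ⟨by linarith [ht.1.1], ?_⟩
    rw [abs_lt]; constructor <;> linarith [ht.2.1, ht.2.2]
  obtain ⟨K, hK⟩ := (isCompact_Icc.reProdIm isCompact_Icc : IsCompact S).exists_bound_of_continuousOn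
    ((FB_diff b).continuousOn.mono hSS)
  have hK0 : 0 ≤ K := (norm_nonneg _).trans (hK 0 (by simp [mem_reProdIm]))
  obtain ⟨A, hA0, hA⟩ := pow_bound 0 hε 3
  obtain ⟨A', hA0', hA'⟩ := pow_bound 1 hε 3
  refine ⟨K * A + 2 * A', by positivity, fun t ht => ?_⟩
  have hx : 0 < Real.exp (ε * t.re) := Real.exp_pos _
  have a1 := hA t ht
  have a2 := hA' t ht
  simp only [pow_zero, pow_one] at a1 a2
  rcases le_total t.re 1 with h | h
  · have := hK t (by
      rw [mem_reProdIm]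
      have := abs_lt.1 ht.2
      exact ⟨⟨ht.1.le, h⟩, ⟨this.1.le, this.2.le⟩⟩)
    have : 0 ≤ 2 * A' * Real.exp (ε * t.re) := by positivity
    nlinarith
  · have ht4 := EE_ne (SS_mono (by norm_num) ht : t ∈ SS 4)
    have b1 : Real.exp t.re / 2 ≤ ‖exp t - 1‖ := by
      have h1 := norm_sub_norm_le (exp t) 1
      rw [norm_exp, norm_one] at h1
      have : 2 ≤ Real.exp t.re := by linarith [Real.add_one_le_exp t.re]
      linarith
    rw [← EE_mul, norm_mul] at b1
    have hE : 0 < ‖EE t‖ := norm_pos_iff.2 ht4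
    have : ‖FB b t‖ ≤ 2 * ‖t‖ := by
      rw [FB, norm_div, div_le_iff₀ hE, norm_exp]
      have : ((b:ℂ) * t).re = b * t.re := by simp
      rw [this]
      have : Real.exp (b * t.re) ≤ Real.exp t.re := by gcongr; nlinarith
      linarith
    have : 0 ≤ K * A * Real.exp (ε * t.re) := by positivity
    nlinarith

theorem tc_exp (b : ℂ) (n : ℕ) : tc (fun t => exp (b * t)) n = b ^ n / n.factorial := by
  rw [tc, iteratedDeriv_cexp_const_mul]; simp

theorem tc_EE (n : ℕ) : tc EE n = 1 / (n + 1).factorial := by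
  have h := tc_shift (F := exp) (analyticAt_cexp) (EE_diff.analyticAt 0) n
  rw [EE, h]
  have := tc_exp 1 (n + 1)
  simpa using this

theorem bern_rec (b : ℝ) (n : ℕ) : ∑ k ∈ Finset.range (n + 1),
    ((bernPoly k b : ℂ) / k.factorial) * (1 / ((n - k) + 1).factorial) = (b:ℂ) ^ n / n.factorial := by
  have hB : ∀ k, (Polynomial.aeval b) (Polynomial.bernoulli k) = bernPoly k b := by
    intro k
    rw [Polynomial.bernoulli, map_sum, bernPoly]
    refine Finset.sum_congr rfl fun i _ => ?_
    rw [Polynomial.aeval_monomial]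
    simp only [map_mul, eq_ratCast, Rat.cast_mul, Rat.cast_natCast]; ring
  have h := congrArg (Polynomial.aeval b) (Polynomial.sum_bernoulli n)
  rw [map_sum, Polynomial.aeval_monomial] at h
  simp only [map_smul, hB] at h
  have h' : ∑ k ∈ Finset.range (n + 1), (((n+1).choose k : ℂ)) * (bernPoly k b : ℂ) = (n + 1) * (b:ℂ)^n := by
    have := congrArg (fun z : ℝ => (z : ℂ)) h
    simp [Rat.smul_def] at this
    exact this
  have e : ∀ k ∈ Finset.range (n + 1), ((bernPoly k b : ℂ) / k.factorial) * (1 / ((n - k) + 1).factorial)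
      = (((n+1).choose k : ℂ)) * (bernPoly k b : ℂ) / (n + 1).factorial := by
    intro k hk
    have hk' : k ≤ n := by simpa [Nat.lt_succ_iff] using hk
    rw [Nat.cast_choose ℂ (by omega : k ≤ n + 1), show n + 1 - k = n - k + 1 by omega]
    have := fac_ne k; have := fac_ne (n - k + 1); have := fac_ne (n + 1)
    field_simp
  rw [Finset.sum_congr rfl e, ← Finset.sum_div, h', Nat.factorial_succ]
  have := fac_ne n
  have h2 : (n:ℂ) + 1 ≠ 0 := by exact_mod_cast n.succ_ne_zero
  push_cast; field_simp

theorem tc_FB (b : ℝ) (n : ℕ) : tc (FB b) n = (bernPoly n b : ℂ) / n.factorial := by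
  have hA : AnalyticAt ℂ (FB b) 0 := (FB_diff b).analyticAt ((SS_open 4).mem_nhds (SS_zero (by norm_num)))
  have hrec : ∀ n, ∑ k ∈ Finset.range (n + 1), tc (FB b) k * (1 / ((n - k) + 1).factorial) =
      (b:ℂ) ^ n / n.factorial := by
    intro n
    rw [← tc_exp, ← tc_congr (F := fun t => FB b t * EE t), tc_mul hA (EE_diff.analyticAt 0)]
    · simp only [tc_EE]
    · filter_upwards [(SS_open 4).mem_nhds (SS_zero (by norm_num))] with t ht
      rw [FB, div_mul_cancel₀ _ (EE_ne ht)]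
  induction n using Nat.strong_induction_on with
  | _ n ih =>
    have h := (hrec n).trans (bern_rec b n).symm
    rw [Finset.sum_range_succ, Finset.sum_range_succ] at h
    rw [Finset.sum_congr rfl (fun k hk => by rw [ih k (by simpa using hk)])] at h
    simpa using h

theorem Cls_B {b : ℝ} (hb1 : b < 1) : Cls (fun j => (bernPoly j b : ℂ) / j.factorial) :=
  ⟨3, by norm_num, FB b, FB_Bdd hb1, tc_FB b⟩
end

section
open Complex

noncomputable def DD (k p : ℕ) (α : ℂ) (φ : ℕ → ℂ) : ℂ :=
  ∑ j ∈ Finset.range (k + 1), (stirling1Unsigned k (j + p) : ℂ) * (j + p).factorial *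
    (poch α j / j.factorial) * φ j

noncomputable def QQ (k p : ℕ) (φ : ℕ → ℂ) (v : ℝ) : ℂ :=
  ∑ j ∈ Finset.range (k + 1), (stirling1Unsigned k (j + p) : ℂ) * (j + p).factorial * φ j * (v:ℂ) ^ j

theorem QQ_bound {φ : ℕ → ℂ} (hφ : Cls φ) (p : ℕ) {ε : ℝ} (hε : 0 < ε) (hε1 : ε < 1) :
    ∃ C : ℝ, 0 ≤ C ∧ ∀ v : ℝ, 0 ≤ v → v ≤ 1 → ∀ k : ℕ,
      ‖QQ (k + 1) p φ v‖ ≤ C * k.factorial * ((k:ℝ) + 2) ^ (2 * ε) := by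
  obtain ⟨D, hD0, hD⟩ := coef_bound hε hε1
  obtain ⟨r, hr, F, hF, hj⟩ := hφ
  obtain ⟨A, hA0, hA⟩ := (hF.mono hr.le).2 (ε/2) (by positivity)
  obtain ⟨A', hA0', hA'⟩ := pow_bound p (ε := ε/2) (by positivity) 2
  refine ⟨A' * (A * Real.exp ε) * D, by positivity, fun v h0 h1 k => ?_⟩
  have hFv : DifferentiableOn ℂ (fun t => F ((v:ℂ) * t)) (SS 2) := by
    refine (hF.mono hr.le).1.comp (by fun_prop) fun t ht => SS_scale ht h0 h1
  have hFa : AnalyticAt ℂ (fun t => F ((v:ℂ) * t)) 0 :=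
    hFv.analyticAt ((SS_open 2).mem_nhds (SS_zero (by norm_num)))
  have hh := hD (fun t => t ^ p * F ((v:ℂ) * t)) (A' * (A * Real.exp ε))
    (DifferentiableOn.mul (by fun_prop) hFv) (fun t ht => ?_) k
  · refine le_trans (le_of_eq ?_) hh
    congr 1
    simp only [iter_eq_tc]
    have hp := tc_pow hFa p
    set G := fun t => t ^ p * F ((v:ℂ) * t) with hG
    have e1 : ∑ l ∈ Finset.range (k + 2), (stirling1Unsigned (k + 1) l : ℂ) * (l.factorial * tc G l)
       = ∑ l ∈ Finset.range (p + (k + 2)), (stirling1Unsigned (k + 1) l : ℂ) * (l.factorial * tc G l) := by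
      refine Finset.sum_subset (by intro l; simp only [Finset.mem_range]; omega) fun l _ hl => ?_
      rw [st_zero (k+1) l (by simp only [Finset.mem_range] at hl; omega)]; simp
    rw [e1, Finset.sum_range_add, Finset.sum_eq_zero, zero_add, QQ]
    · refine Finset.sum_congr rfl fun j _ => ?_
      rw [hp.1, tc_scale, hj, add_comm p j]; ring
    · intro l hl
      rw [hp.2 l (by simpa using hl)]; simp
  · rw [norm_mul, norm_pow]
    have a1 := hA' t ht
    have a2 := hA _ (SS_scale ht h0 h1)
    have hre : ((v:ℂ) * t).re ≤ t.re + 2 := by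
      have : ((v:ℂ) * t).re = v * t.re := by simp
      rw [this]
      have := ht.1
      nlinarith
    have a3 : ‖F ((v:ℂ) * t)‖ ≤ A * Real.exp ε * Real.exp (ε/2 * t.re) := by
      refine a2.trans ?_
      rw [mul_assoc, ← Real.exp_add]
      gcongr
      nlinarith
    refine (mul_le_mul a1 a3 (norm_nonneg _) (by positivity)).trans (le_of_eq ?_)
    rw [show ε * t.re = ε/2 * t.re + ε/2*t.re by ring, Real.exp_add]; ring

theorem Gamma_poch {α : ℂ} (h : 0 < α.re) (j : ℕ) : Gamma (α + j) = poch α j * Gamma α := by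
  induction j with
  | zero => simp [poch]
  | succ j ih =>
    have : α + j ≠ 0 := by
      intro h'; have := congrArg re h'; simp at this; linarith [j.cast_nonneg (α := ℝ)]
    rw [Nat.cast_succ, ← add_assoc, Gamma_add_one _ this, ih, poch, poch, Finset.prod_range_succ]; ring

theorem poch_ne {α : ℂ} (h : 0 < α.re) (j : ℕ) : poch α j ≠ 0 := by
  have := Gamma_poch h j
  intro h0; rw [h0, zero_mul] at this
  exact Gamma_ne_zero_of_re_pos (by simp; linarith [j.cast_nonneg (α := ℝ)]) this

theorem beta_poch {α β : ℂ} (h : 0 < α.re) (hβ : 0 < β.re) (j : ℕ) :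
    betaIntegral (α + j) β * poch (α + β) j = poch α j * betaIntegral α β := by
  have h1 := Gamma_mul_Gamma_eq_betaIntegral h hβ
  have h2 := Gamma_mul_Gamma_eq_betaIntegral (s := α + j) (t := β) (by simp; linarith [j.cast_nonneg (α := ℝ)]) hβ
  have hab : 0 < (α + β).re := by simp; linarith
  rw [Gamma_poch h, show α + j + β = α + β + j by ring, Gamma_poch hab] at h2
  have hne := Gamma_ne_zero_of_re_pos hab
  apply mul_left_cancel₀ hne
  linear_combination -h2 + poch α j * h1

theorem beta_shift_int {α β : ℂ} (j : ℕ) : betaIntegral (α + j) β =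
    ∫ v in (0:ℝ)..1, (v:ℂ) ^ (α - 1) * (1 - (v:ℂ)) ^ (β - 1) * (v:ℂ) ^ j := by
  rw [betaIntegral]
  refine intervalIntegral.integral_congr_ae (Filter.Eventually.of_forall fun v hv => ?_)
  have hv0 : (v:ℂ) ≠ 0 := by
    rw [Set.uIoc_of_le zero_le_one] at hv
    exact_mod_cast hv.1.ne'
  rw [show α + j - 1 = α - 1 + j by ring, cpow_add _ _ hv0, cpow_natCast]; ring

theorem beta_shift_intble {α β : ℂ} (h : 0 < α.re) (hβ : 0 < β.re) (j : ℕ) : IntervalIntegrable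
    (fun v : ℝ => (v:ℂ) ^ (α - 1) * (1 - (v:ℂ)) ^ (β - 1) * (v:ℂ) ^ j) MeasureTheory.volume 0 1 := by
  exact (betaIntegral_convergent h hβ).mul_continuousOn (by fun_prop)

theorem DD_int {α β : ℂ} (h : 0 < α.re) (hβ : 0 < β.re) (k p : ℕ) (φ : ℕ → ℂ) :
    DD k p α φ * betaIntegral α β = ∫ v in (0:ℝ)..1, (v:ℂ) ^ (α - 1) * (1 - (v:ℂ)) ^ (β - 1) *
      QQ k p (fun j => poch (α + β) j / j.factorial * φ j) v := by
  have hab : 0 < (α + β).re := by simp; linarith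
  have e : ∀ v : ℝ, (v:ℂ) ^ (α - 1) * (1 - (v:ℂ)) ^ (β - 1) *
      QQ k p (fun j => poch (α + β) j / j.factorial * φ j) v = ∑ j ∈ Finset.range (k + 1),
      ((stirling1Unsigned k (j + p) : ℂ) * (j + p).factorial * (poch (α + β) j / j.factorial * φ j)) *
      ((v:ℂ) ^ (α - 1) * (1 - (v:ℂ)) ^ (β - 1) * (v:ℂ) ^ j) := by
    intro v; rw [QQ, Finset.mul_sum]
    exact Finset.sum_congr rfl fun j _ => by ring
  simp only [e]
  rw [intervalIntegral.integral_finsetSum (fun j _ => (beta_shift_intble h hβ j).const_mul _), DD, Finset.sum_mul]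
  refine Finset.sum_congr rfl fun j _ => ?_
  rw [intervalIntegral.integral_const_mul, ← beta_shift_int]
  linear_combination -(stirling1Unsigned k (j + p) : ℂ) * (j + p).factorial * φ j / j.factorial * beta_poch h hβ j

def Bd (α0 : ℂ) : Prop := ∀ (p : ℕ) (φ : ℕ → ℂ), Cls φ → ∀ ε : ℝ, 0 < ε → ε < 1 →
  ∃ C : ℝ, 0 ≤ C ∧ ∀ᶠ α in nhds α0, ∀ k : ℕ, ‖DD (k + 1) p α φ‖ ≤ C * (k.factorial * ((k:ℝ) + 2) ^ (2 * ε))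

theorem real_beta_int {δ : ℝ} (hδ : 0 < δ) : IntervalIntegrable
    (fun v : ℝ => v ^ (δ - 1) * (1 - v) ^ (δ - 1)) MeasureTheory.volume 0 1 := by
  have h := (betaIntegral_convergent (u := δ) (v := δ) (by simpa) (by simpa)).norm
  refine h.congr_ae ?_
  rw [Set.uIoc_of_le zero_le_one]
  rw [Filter.EventuallyEq, MeasureTheory.ae_restrict_iff' measurableSet_Ioc]
  have h1 : ∀ᵐ v : ℝ, v ≠ 1 := by simp [MeasureTheory.ae_iff]
  filter_upwards [h1] with v hv1 hv
  have hv2 : 0 < 1 - v := by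
    have := lt_of_le_of_ne hv.2 hv1; linarith
  rw [norm_mul, norm_cpow_eq_rpow_re_of_pos hv.1, show (1:ℂ) - v = ((1 - v : ℝ) : ℂ) by push_cast; ring,
    norm_cpow_eq_rpow_re_of_pos hv2]
  simp

theorem Bd_base {α0 : ℂ} (h : 0 < α0.re) : Bd α0 := by
  intro p φ hφ ε hε hε1
  obtain ⟨L, hL⟩ := exists_nat_gt α0.re
  have hL' : α0.re < ((L + 1 : ℕ) : ℂ).re := by simp; linarith
  obtain ⟨C, hC0, hC⟩ := QQ_bound (hφ.poch L) p hε hε1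
  set δ := min α0.re (((L + 1 : ℕ) : ℂ).re - α0.re) / 2 with hδ
  have hδ0 : 0 < δ := by have := lt_min h (sub_pos.2 hL'); positivity
  have hδ1 : δ < α0.re := by
    have := min_le_left α0.re (((L + 1 : ℕ) : ℂ).re - α0.re); linarith
  have hδ2 : δ < ((L + 1 : ℕ) : ℂ).re - α0.re := by
    have := min_le_right α0.re (((L + 1 : ℕ) : ℂ).re - α0.re); linarith
  have ev1 : ∀ᶠ α in nhds α0, δ < α.re := continuous_re.continuousAt.eventually (lt_mem_nhds hδ1)
  have ev2 : ∀ᶠ α in nhds α0, δ < ((L + 1 : ℕ) : ℂ).re - α.re :=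
    (continuous_const.sub continuous_re).continuousAt.eventually (lt_mem_nhds hδ2)
  set g : ℂ → ℂ := fun α => Gamma α * Gamma ((L + 1 : ℕ) - α) with hg
  have hg0 : g α0 ≠ 0 := mul_ne_zero (Gamma_ne_zero_of_re_pos h)
    (Gamma_ne_zero_of_re_pos (by simp at hL' ⊢; linarith))
  have hgc : ContinuousAt g α0 := by
    have d1 : DifferentiableAt ℂ Gamma α0 := differentiableAt_Gamma _ fun m hm => by
      rw [hm] at h; simp at h; linarith [m.cast_nonneg (α := ℝ)]
    have d2 : DifferentiableAt ℂ Gamma ((L + 1 : ℕ) - α0) := differentiableAt_Gamma _ fun m hm => by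
      have := congrArg re hm; simp at this hL'; linarith [m.cast_nonneg (α := ℝ)]
    refine d1.continuousAt.mul ?_
    exact ContinuousAt.comp (f := fun α : ℂ => ((L + 1 : ℕ) : ℂ) - α) d2.continuousAt (by fun_prop)
  have ev3 : ∀ᶠ α in nhds α0, ‖g α0‖ / 2 < ‖g α‖ :=
    hgc.norm.eventually (lt_mem_nhds (by have := norm_pos_iff.2 hg0; linarith))
  set J := ∫ v in (0:ℝ)..1, v ^ (δ - 1) * (1 - v) ^ (δ - 1) with hJ
  have hJ0 : 0 ≤ J := intervalIntegral.integral_nonneg zero_le_one fun v hv =>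
    mul_nonneg (Real.rpow_nonneg hv.1 _) (Real.rpow_nonneg (by linarith [hv.2]) _)
  have hgp := norm_pos_iff.2 hg0
  refine ⟨‖Gamma ((L + 1 : ℕ) : ℂ)‖ * (C * J) / (‖g α0‖ / 2), by positivity, ?_⟩
  filter_upwards [ev1, ev2, ev3] with α h1 h2 h3 k
  have hα : 0 < α.re := by linarith
  have hβ : 0 < (((L + 1 : ℕ) : ℂ) - α).re := by rw [sub_re]; linarith
  have hi := DD_int hα hβ (k + 1) p φ
  have hab : α + (((L + 1 : ℕ) : ℂ) - α) = ((L + 1 : ℕ) : ℂ) := by ring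
  have hbeta := Gamma_mul_Gamma_eq_betaIntegral hα hβ
  rw [hab] at hi hbeta
  have hn : ‖DD (k+1) p α φ * betaIntegral α (((L + 1 : ℕ) : ℂ) - α)‖ ≤
      C * J * (k.factorial * ((k:ℝ) + 2) ^ (2 * ε)) := by
    rw [hi]
    have : C * J * (k.factorial * ((k:ℝ) + 2) ^ (2 * ε)) = ∫ v in (0:ℝ)..1, v ^ (δ - 1) * (1 - v) ^ (δ - 1) *
      (C * k.factorial * ((k:ℝ) + 2) ^ (2 * ε)) := by
      rw [intervalIntegral.integral_mul_const]; ring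
    rw [this]
    refine intervalIntegral.norm_integral_le_of_norm_le zero_le_one ?_ ((real_beta_int hδ0).mul_const _)
    have h1 : ∀ᵐ v : ℝ, v ≠ 1 := by simp [MeasureTheory.ae_iff]
    filter_upwards [h1] with v hv1 hv
    have hv2 : 0 < 1 - v := by
      have := lt_of_le_of_ne hv.2 hv1; linarith
    rw [norm_mul, norm_mul, norm_cpow_eq_rpow_re_of_pos hv.1,
      show (1:ℂ) - v = ((1 - v : ℝ) : ℂ) by push_cast; ring, norm_cpow_eq_rpow_re_of_pos hv2]
    refine mul_le_mul (mul_le_mul ?_ ?_ (by positivity) (Real.rpow_nonneg hv.1.le _)) (hC v hv.1.le hv.2 k)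
      (norm_nonneg _) (mul_nonneg (Real.rpow_nonneg hv.1.le _) (Real.rpow_nonneg hv2.le _))
    · exact Real.rpow_le_rpow_of_exponent_ge hv.1 hv.2 (by simp; linarith)
    · refine Real.rpow_le_rpow_of_exponent_ge hv2 (by linarith [hv.1]) ?_
      rw [sub_re, sub_re, one_re]; linarith
  rw [div_mul_eq_mul_div, le_div_iff₀ (by positivity)]
  calc ‖DD (k+1) p α φ‖ * (‖g α0‖ / 2) ≤ ‖DD (k+1) p α φ‖ * ‖g α‖ := by gcongr
    _ = ‖Gamma ((L + 1 : ℕ) : ℂ)‖ * ‖DD (k+1) p α φ * betaIntegral α (((L + 1 : ℕ) : ℂ) - α)‖ := by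
        rw [hg]; simp only []; rw [hbeta, norm_mul, norm_mul]; ring
    _ ≤ ‖Gamma ((L + 1 : ℕ) : ℂ)‖ * (C * J * (k.factorial * ((k:ℝ) + 2) ^ (2 * ε))) := by gcongr
    _ = _ := by ring

theorem DD_step (k p : ℕ) (α : ℂ) (φ : ℕ → ℂ) :
    DD k p α φ = DD k p (α + 1) φ - DD k (p + 1) (α + 1) (fun j => φ (j + 1)) := by
  have e : DD k (p + 1) (α + 1) (fun j => φ (j + 1)) = ∑ j ∈ Finset.range k,
      (stirling1Unsigned k (j + (p + 1)) : ℂ) * (j + (p + 1)).factorial *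
    (poch (α + 1) j / j.factorial) * φ (j + 1) := by
    rw [DD, Finset.sum_range_succ, st_zero k (k + (p + 1)) (by omega)]; simp
  rw [e, DD, DD, Finset.sum_range_succ', Finset.sum_range_succ' (n := k), add_sub_right_comm,
    ← Finset.sum_sub_distrib]
  congr 1
  · refine Finset.sum_congr rfl fun j _ => ?_
    rw [show j + (p + 1) = j + 1 + p by ring]
    have h1 : poch α (j + 1) = α * poch (α + 1) j := by
      rw [poch_step, poch, Finset.prod_range_succ, poch]; ring
    have h2 : poch (α + 1) (j + 1) = poch (α + 1) j * (α + 1 + j) := by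
      rw [poch, Finset.prod_range_succ, poch]
    rw [h1, h2, Nat.factorial_succ j]
    have := fac_ne j
    have h2 : (j:ℂ) + 1 ≠ 0 := by exact_mod_cast j.succ_ne_zero
    push_cast; field_simp; ring

theorem Bd_all (α0 : ℂ) : Bd α0 := by
  have key : ∀ n : ℕ, ∀ α0 : ℂ, 0 < α0.re + n → Bd α0 := by
    intro n
    induction n with
    | zero => intro α0 h; exact Bd_base (by simpa using h)
    | succ n ih =>
      intro α0 h p φ hφ ε hε hε1
      have hb := ih (α0 + 1) (by simp at h ⊢; linarith)
      obtain ⟨C, hC0, hC⟩ := hb p φ hφ ε hε hε1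
      obtain ⟨C', hC0', hC'⟩ := hb (p+1) _ hφ.shift ε hε hε1
      have ht : Filter.Tendsto (fun α : ℂ => α + 1) (nhds α0) (nhds (α0 + 1)) :=
        (continuous_add_const 1).tendsto α0
      refine ⟨C + C', by positivity, ?_⟩
      filter_upwards [ht.eventually hC, ht.eventually hC'] with α h1 h2 k
      rw [DD_step, add_mul]
      exact (norm_sub_le _ _).trans (add_le_add (h1 k) (h2 k))
  obtain ⟨n, hn⟩ := exists_nat_gt (-α0.re)
  exact key n α0 (by linarith)
end

section
open Complex

noncomputable def phB (b : ℝ) (j : ℕ) : ℂ := (bernPoly j b : ℂ) / j.factorial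

theorem cchoose_eq (m : ℂ) (l : ℕ) : cchoose (m + 1) l = (-1) ^ l * (poch (-m - 1) l / l.factorial) := by
  rw [cchoose, poch]
  have : ∏ i ∈ Finset.range l, (m + 1 - (i:ℂ)) = (-1) ^ l * ∏ i ∈ Finset.range l, (-m - 1 + (i:ℂ)) := by
    rw [← Finset.card_range l, ← Finset.prod_const, Finset.card_range, ← Finset.prod_mul_distrib]
    exact Finset.prod_congr rfl fun i _ => by ring
  rw [this, mul_div_assoc]

theorem term_eq (m : ℂ) (b : ℝ) (k : ℕ) : (-1 : ℂ) ^ (k + 1) *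
          (∑ l ∈ Finset.Icc 1 (k + 1),
            cchoose (m + 1) l * (S1 (k + 1) l : ℂ) * (bernPoly l b : ℂ)) = DD (k + 1) 0 (-m - 1) (phB b) := by
  rw [DD, Finset.sum_range_succ' (n := k + 1)]
  simp only [add_zero, st_succ_zero, Nat.cast_zero, zero_mul]
  rw [Finset.sum_bij (s := Finset.Icc 1 (k+1)) (t := Finset.range (k+1)) (fun l _ => l - 1)
    (g := fun j => cchoose (m + 1) (j + 1) * (S1 (k + 1) (j + 1) : ℂ) * (bernPoly (j + 1) b : ℂ))]
  · rw [Finset.mul_sum]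
    refine Finset.sum_congr rfl fun j _ => ?_
    rw [cchoose_eq, S1, phB]
    push_cast
    have := fac_ne (j + 1)
    have h1 : (-1:ℂ) ^ (k + 1) * (-1) ^ (j + 1) * (-1) ^ (k + 1 + (j + 1)) = 1 := by
      rw [← pow_add, ← pow_add]
      exact Even.neg_one_pow ⟨k + 1 + (j + 1), by ring⟩
    calc _ = ((-1:ℂ) ^ (k + 1) * (-1) ^ (j + 1) * (-1) ^ (k + 1 + (j + 1))) * (poch (-m - 1) (j + 1) / (j+1).factorial *
          (stirling1Unsigned (k+1) (j+1) : ℂ) * (bernPoly (j + 1) b : ℂ)) := by ring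
      _ = _ := by rw [h1]; field_simp
  · intro a ha; simp at ha ⊢; omega
  · intro a ha a' ha' h; simp at ha ha' h; omega
  · intro j hj; exact ⟨j + 1, by simp at hj ⊢; omega, by simp⟩
  · intro a ha; simp at ha; rw [show a - 1 + 1 = a by omega]

theorem rising_lower {x : ℝ} (hx : 0 < x) (k : ℕ) :
    (k.factorial : ℝ) * ((k:ℝ) + 1) ^ (min x 1) ≤ ‖risingProd (x:ℂ) k‖ := by
  induction k with
  | zero => simp [risingProd]
  | succ k ih =>
    rw [risingProd, Finset.prod_range_succ, ← risingProd, norm_mul]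
    have e : (x:ℂ) + k + 1 = ((x + k + 1 : ℝ) : ℂ) := by push_cast; ring
    rw [e, norm_real, Real.norm_of_nonneg (by positivity)]
    have hy0 : 0 < min x 1 := lt_min hx one_pos
    have hy1 : min x 1 ≤ 1 := min_le_right _ _
    have hyx : min x 1 ≤ x := min_le_left _ _
    set y := min x 1
    have hb := rpow_one_add_le_one_add_mul_self (s := 1/((k:ℝ)+1)) (by
      have : 0 ≤ 1/((k:ℝ)+1) := by positivity
      linarith) hy0.le hy1
    have e2 : ((k + 1 : ℕ) : ℝ) + 1 = ((k:ℝ) + 1) * (1 + 1/((k:ℝ)+1)) := by push_cast; field_simp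
    rw [e2, Real.mul_rpow (by positivity) (by positivity), Nat.factorial_succ]
    have h3 : ((k:ℝ) + 1) * (1 + 1/((k:ℝ)+1)) ^ y ≤ x + k + 1 := by
      calc _ ≤ ((k:ℝ) + 1) * (1 + y * (1/((k:ℝ)+1))) := by gcongr
        _ = k + 1 + y := by field_simp
        _ ≤ _ := by linarith
    calc _ = ((k.factorial : ℝ) * ((k:ℝ) + 1) ^ y) * (((k:ℝ) + 1) * (1 + 1/((k:ℝ)+1)) ^ y) := by push_cast; ring
      _ ≤ _ := by gcongr

theorem sum_u (y : ℝ) (hy : 0 < y) : Summable (fun k : ℕ => 2 * ((k:ℝ) + 2) ^ (-1 - y)) := by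
  refine Summable.mul_left 2 ?_
  have := (summable_nat_add_iff 2).2 (Real.summable_nat_rpow.2 (by linarith : -1 - y < -1))
  simpa using this

theorem term_bound {x C B ε : ℝ} (hx : 0 < x) (hε : ε = min x 1 / 4) (hC : 0 ≤ C) (k : ℕ)
    (hB : B ≤ C * (k.factorial * ((k:ℝ) + 2) ^ (2 * ε))) :
    B / ‖risingProd (x:ℂ) (k + 1)‖ ≤ C * (2 * ((k:ℝ) + 2) ^ (-1 - (min x 1)/2)) := by
  have hl := rising_lower hx (k + 1)
  set y := min x 1
  have hp : 0 < ((k + 1).factorial : ℝ) * (((k + 1 : ℕ):ℝ) + 1) ^ y := by positivity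
  rw [div_le_iff₀ (hp.trans_le hl)]
  refine hB.trans ?_
  rw [mul_assoc C]
  refine mul_le_mul_of_nonneg_left ?_ hC
  refine le_trans ?_ (mul_le_mul_of_nonneg_left hl (by positivity))
  have e : ((k + 1 : ℕ):ℝ) + 1 = k + 2 := by push_cast; ring
  rw [e, Nat.factorial_succ]
  have e3 : ((k:ℝ) + 2) ^ (2 * ε) = ((k:ℝ) + 2) * (((k:ℝ) + 2) ^ (-1 - y/2) * ((k:ℝ) + 2) ^ y) := by
    rw [← Real.rpow_add (by positivity), ← Real.rpow_one_add' (by positivity)]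
    · congr 1; rw [hε]; ring
    · have : 0 < y := lt_min hx one_pos
      linarith
  rw [e3]
  push_cast
  set A := ((k:ℝ) + 2) ^ (-1 - y/2) * ((k:ℝ) + 2) ^ y
  have hA : 0 ≤ A := by positivity
  have : (k.factorial:ℝ) * (((k:ℝ) + 2) * A) ≤ (k.factorial:ℝ) * ((2 * (k + 1)) * A) := by
    gcongr; linarith [k.cast_nonneg (α := ℝ)]
  refine this.trans (le_of_eq ?_)
  simp only [A]; ring

noncomputable def TT (x b : ℝ) (k : ℕ) (α : ℂ) : ℂ := DD (k + 1) 0 α (phB b) / risingProd (x:ℂ) (k + 1)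

theorem TT_loc {x b : ℝ} (hx : 0 < x) (hb : b < 1) (α0 : ℂ) : ∃ C : ℝ, 0 ≤ C ∧ ∀ᶠ α in nhds α0, ∀ k : ℕ,
    ‖TT x b k α‖ ≤ C * (2 * ((k:ℝ) + 2) ^ (-1 - (min x 1)/2)) := by
  have hy0 : 0 < min x 1 := lt_min hx one_pos
  have hy1 : min x 1 ≤ 1 := min_le_right _ _
  obtain ⟨C, hC0, hC⟩ := Bd_all α0 0 (phB b) (Cls_B hb) (min x 1 / 4) (by linarith) (by linarith)
  refine ⟨C, hC0, ?_⟩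
  filter_upwards [hC] with α h k
  rw [TT, norm_div]
  exact term_bound hx rfl hC0 k (h k)

theorem TT_summable {x b : ℝ} (hx : 0 < x) (hb : b < 1) (α : ℂ) : Summable (fun k => ‖TT x b k α‖) := by
  obtain ⟨C, hC0, hC⟩ := TT_loc hx hb α
  refine Summable.of_nonneg_of_le (fun _ => norm_nonneg _) hC.self_of_nhds ((sum_u _ ?_).mul_left C)
  have : 0 < min x 1 := lt_min hx one_pos
  linarith

theorem TT_tsum_diff {x b : ℝ} (hx : 0 < x) (hb : b < 1) : Differentiable ℂ (fun α => ∑' k, TT x b k α) := by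
  intro α0
  obtain ⟨C, hC0, hC⟩ := TT_loc hx hb α0
  obtain ⟨U, hU, hUo, hU0⟩ := eventually_nhds_iff.1 hC
  have : 0 < min x 1 := lt_min hx one_pos
  have h := differentiableOn_tsum_of_summable_norm (F := fun k α => TT x b k α) (U := U)
    ((sum_u (min x 1 / 2) (by linarith)).mul_left C) (fun k => ?_) hUo (fun k α hα => hU α hα k)
  · exact h.differentiableAt (hUo.mem_nhds hU0)
  · unfold TT DD poch
    fun_prop
end

section
open Complex MeasureTheory

theorem hs_congr {f g : ℕ → ℝ} {a b : ℝ} (h : HasSum f a) (hf : ∀ n, g n = f n) (ha : b = a) :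
    HasSum g b := by
  rw [ha, funext hf]; exact h

theorem hs_congrC {f g : ℕ → ℂ} {a b : ℂ} (h : HasSum f a) (hf : ∀ n, g n = f n) (ha : b = a) :
    HasSum g b := by
  rw [ha, funext hf]; exact h

theorem swap_nonneg {f : ℕ → ℝ → ℝ} {S : ℝ → ℝ} {a : ℕ → ℝ}
    (h1 : ∀ n, IntegrableOn (f n) (Set.Ioo 0 1)) (h2 : ∀ n, ∀ t ∈ Set.Ioo (0:ℝ) 1, 0 ≤ f n t)
    (h3 : ∀ n, ∫ t in Set.Ioo (0:ℝ) 1, f n t = a n) (h4 : Summable a)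
    (h5 : ∀ t ∈ Set.Ioo (0:ℝ) 1, HasSum (fun n => f n t) (S t)) :
    HasSum a (∫ t in Set.Ioo (0:ℝ) 1, S t) := by
  have e : ∀ n, ∫ t in Set.Ioo (0:ℝ) 1, ‖f n t‖ = a n := by
    intro n
    rw [← h3 n]
    exact setIntegral_congr_fun measurableSet_Ioo fun t ht => Real.norm_of_nonneg (h2 n t ht)
  have := hasSum_integral_of_summable_integral_norm (F := f) h1 (by simpa only [e] using h4)
  simp only [h3] at this
  refine hs_congr this (fun _ => rfl) ?_
  exact setIntegral_congr_fun measurableSet_Ioo fun t ht => (h5 t ht).tsum_eq.symm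

theorem int_log_pow {p : ℝ} (hp : 0 < p) :
    IntervalIntegrable (fun u : ℝ => -Real.log u * u ^ (p - 1)) volume 0 1 ∧
    ∫ u in (0:ℝ)..1, -Real.log u * u ^ (p - 1) = 1 / p ^ 2 := by
  set g : ℝ → ℝ := fun u => (u ^ p - u ^ p * Real.log (u ^ p)) / p ^ 2 with hg
  have hc : Continuous g := by
    have h1 : Continuous (fun u : ℝ => u ^ p) := Real.continuous_rpow_const hp.le
    have h2 := Real.continuous_mul_log.comp h1
    exact (h1.sub h2).div_const _
  have hd : ∀ u ∈ Set.Ioo (0:ℝ) 1, HasDerivAt g (-Real.log u * u ^ (p - 1)) u := by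
    intro u hu
    have h1 : HasDerivAt (fun u : ℝ => u ^ p) (p * u ^ (p - 1)) u :=
      Real.hasDerivAt_rpow_const (Or.inl hu.1.ne')
    have hne : u ^ p ≠ 0 := (Real.rpow_pos_of_pos hu.1 p).ne'
    have h2 := (h1.sub (h1.mul (h1.log hne))).div_const (p ^ 2)
    refine h2.congr_deriv ?_
    rw [Real.log_rpow hu.1]
    field_simp
    ring
  have hi : IntervalIntegrable (fun u : ℝ => -Real.log u * u ^ (p - 1)) volume 0 1 := by
    refine intervalIntegral.intervalIntegrable_deriv_of_nonneg (g := g) hc.continuousOn ?_ ?_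
    · simpa using hd
    · intro u hu
      simp at hu
      exact mul_nonneg (neg_nonneg.2 (Real.log_nonpos hu.1.le hu.2.le)) (Real.rpow_nonneg hu.1.le _)
  refine ⟨hi, ?_⟩
  rw [intervalIntegral.integral_eq_sub_of_hasDerivAt_of_le zero_le_one hc.continuousOn hd hi]
  simp [hg, hp.ne']

theorem int_log_pow' {p : ℝ} (hp : 0 < p) :
    IntegrableOn (fun u : ℝ => -Real.log (1 - u) * (1 - u) ^ (p - 1)) (Set.Ioo 0 1) ∧
    ∫ u in Set.Ioo (0:ℝ) 1, -Real.log (1 - u) * (1 - u) ^ (p - 1) = 1 / p ^ 2 := by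
  obtain ⟨h1, h2⟩ := int_log_pow hp
  constructor
  · have := (h1.comp_sub_left 1).symm
    simp only [sub_zero, sub_self] at this
    rw [intervalIntegrable_iff_integrableOn_Ioo_of_le zero_le_one] at this
    exact this
  · rw [← integral_Ioc_eq_integral_Ioo, ← intervalIntegral.integral_of_le zero_le_one,
      intervalIntegral.integral_comp_sub_left (fun u => -Real.log u * u ^ (p - 1)) 1]
    simpa using h2

noncomputable def fbR (b τ : ℝ) : ℝ := τ * Real.exp (b * τ) / (Real.exp τ - 1)

theorem fbR_eq {b τ : ℝ} (hτ : 0 < τ) : FB b (τ:ℂ) = (fbR b τ : ℂ) := by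
  have h := EE_mul (τ:ℂ)
  have h1 : exp (τ:ℂ) - 1 = ((Real.exp τ - 1 : ℝ) : ℂ) := by push_cast; ring
  have hpos : 0 < Real.exp τ - 1 := by have := Real.add_one_lt_exp hτ.ne'; linarith
  have hτ' : (τ:ℂ) ≠ 0 := by exact_mod_cast hτ.ne'
  have e : EE τ = ((Real.exp τ - 1 : ℝ) : ℂ) / τ := by
    rw [eq_div_iff hτ', mul_comm, h, h1]
  have hne : ((Real.exp τ - 1 : ℝ) : ℂ) ≠ 0 := by exact_mod_cast hpos.ne'
  rw [FB, e, fbR]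
  rw [ofReal_div, ofReal_mul, ofReal_exp, ofReal_mul]
  field_simp

theorem fbR_series {b τ : ℝ} (hτ : 0 < τ) :
    HasSum (fun n : ℕ => τ * Real.exp (-((n:ℝ) + 1 - b) * τ)) (fbR b τ) := by
  have hlt : Real.exp (-τ) < 1 := by simpa using hτ
  have h := (hasSum_geometric_of_lt_one (Real.exp_pos (-τ)).le hlt).mul_left (τ * Real.exp (b * τ) * Real.exp (-τ))
  have hpos : 0 < Real.exp τ - 1 := by have := Real.add_one_lt_exp hτ.ne'; linarith
  refine hs_congr h (fun n => ?_) ?_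
  · rw [← Real.exp_nat_mul, mul_assoc, mul_assoc, ← Real.exp_add, ← Real.exp_add]
    congr 2; ring
  · rw [fbR, Real.exp_neg]
    have := (Real.exp_pos τ).ne'
    have h2 : 1 - (Real.exp τ)⁻¹ ≠ 0 := by
      rw [Real.exp_neg] at hlt; linarith
    field_simp

theorem sum_sq {y v b : ℝ} (hy : 0 < y) (hv : 0 < v) (hb : b < 1) :
    Summable (fun n : ℕ => v / (y + ((n:ℝ) + 1 - b) * v) ^ 2) := by
  have h := (summable_nat_add_iff 1).2 (Real.summable_nat_pow_inv.2 (by norm_num : 1 < 2))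
  have h2 : Summable (fun n : ℕ => v / (min y v)^2 * ((((n + 1 : ℕ):ℝ) ^ 2)⁻¹)) := h.mul_left _
  refine Summable.of_nonneg_of_le (fun n => by positivity) (fun n => ?_) h2
  have hm : 0 < min y v := lt_min hy hv
  set q := min y v
  have hq1 : q ≤ y := min_le_left _ _
  have hq2 : q ≤ v := min_le_right _ _
  rw [div_mul_eq_mul_div, div_eq_mul_inv v, mul_div_assoc, div_eq_mul_inv, ← mul_inv, ← mul_pow]
  gcongr
  push_cast
  have : 0 ≤ (1 - b) * v := by nlinarith
  nlinarith [n.cast_nonneg (α := ℝ), mul_nonneg (n.cast_nonneg (α := ℝ)) (sub_nonneg.2 hq2)]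

theorem int_fb {y v b : ℝ} (hy : 0 < y) (hv : 0 < v) (hb : b < 1) :
    HasSum (fun n : ℕ => v / (y + ((n:ℝ) + 1 - b) * v) ^ 2)
      (∫ u in Set.Ioo (0:ℝ) 1, fbR b (v * -Real.log (1 - u)) * (1 - u) ^ (y - 1)) := by
  have hp : ∀ n : ℕ, 0 < y + ((n:ℝ) + 1 - b) * v := by
    intro n
    have : 0 < (n:ℝ) + 1 - b := by linarith [n.cast_nonneg (α := ℝ)]
    positivity
  refine swap_nonneg (f := fun n u => v * (-Real.log (1 - u) * (1 - u) ^ (y + ((n:ℝ) + 1 - b) * v - 1)))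
    (fun n => (int_log_pow' (hp n)).1.const_mul v) ?_ ?_ (sum_sq hy hv hb) ?_
  · intro n u hu
    have : Real.log (1 - u) ≤ 0 := Real.log_nonpos (by linarith [hu.2]) (by linarith [hu.1])
    have := Real.rpow_nonneg (sub_nonneg.2 hu.2.le) (y + ((n:ℝ) + 1 - b) * v - 1)
    exact mul_nonneg hv.le (mul_nonneg (by linarith) this)
  · intro n
    rw [integral_const_mul, (int_log_pow' (hp n)).2]; ring
  · intro u hu
    have hu1 : 0 < 1 - u := by linarith [hu.2]
    have hl : Real.log (1 - u) < 0 := Real.log_neg hu1 (by linarith [hu.1])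
    have h := (fbR_series (b := b) (τ := v * -Real.log (1 - u)) (mul_pos hv (by linarith))).mul_right ((1 - u) ^ (y - 1))
    refine hs_congr h (fun n => ?_) rfl
    rw [Real.rpow_def_of_pos hu1, Real.rpow_def_of_pos hu1]
    rw [mul_assoc (v * -Real.log (1 - u)), ← Real.exp_add, ← mul_assoc]
    congr 2; ring

theorem moebius {y β α : ℝ} (hy : 0 < y) (hβ : 0 < β)
    (hB : IntegrableOn (fun p : ℝ => p ^ α * (1 - p) ^ (-α)) (Set.Ioo 0 1)) :
    IntegrableOn (fun v : ℝ => v ^ α * (1 - v) ^ (-α) * (y / (y + β * v) ^ 2)) (Set.Ioo 0 1) ∧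
    ∫ v in Set.Ioo (0:ℝ) 1, v ^ α * (1 - v) ^ (-α) * (y / (y + β * v) ^ 2) =
      y ^ α * (y + β) ^ (-1 - α) * ∫ p in Set.Ioo (0:ℝ) 1, p ^ α * (1 - p) ^ (-α) := by
  set g : ℝ → ℝ := fun v => v * (y + β) / (y + β * v) with hg
  set g' : ℝ → ℝ := fun v => y * (y + β) / (y + β * v) ^ 2 with hg'
  have hden : ∀ v ∈ Set.Ioo (0:ℝ) 1, 0 < y + β * v := fun v hv => by have := hv.1; positivity
  have hd : ∀ v ∈ Set.Ioo (0:ℝ) 1, HasDerivWithinAt g (g' v) (Set.Ioo 0 1) v := by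
    intro v hv
    have hne := (hden v hv).ne'
    have h1 : HasDerivAt (fun v : ℝ => v * (y + β)) (y + β) v := by
      simpa using (hasDerivAt_id v).mul_const (y + β)
    have h2 : HasDerivAt (fun v : ℝ => y + β * v) β v := by
      simpa using ((hasDerivAt_id v).const_mul β).const_add y
    have := h1.div h2 hne
    refine (this.congr_deriv ?_).hasDerivWithinAt
    rw [hg']; simp only []; congr 1; ring
  have hinj : Set.InjOn g (Set.Ioo 0 1) := by
    intro v hv w hw h
    have h1 := (hden v hv).ne'
    have h2 := (hden w hw).ne'
    simp only [hg] at h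
    rw [div_eq_div_iff h1 h2] at h
    have : (v - w) * ((y + β) * y) = 0 := by linear_combination h
    rcases mul_eq_zero.1 this with h | h
    · linarith
    · exact absurd h (by positivity)
  have himg : g '' Set.Ioo 0 1 = Set.Ioo 0 1 := by
    ext p; constructor
    · rintro ⟨v, hv, rfl⟩
      have h1 := hden v hv
      have := hv.1
      refine ⟨by simp only [hg]; positivity, ?_⟩
      simp only [hg]
      rw [div_lt_one h1]; nlinarith [hv.2]
    · intro hp
      have h1 : 0 < y + β - β * p := by nlinarith [hp.2]
      have := hp.1
      refine ⟨y * p / (y + β - β * p), ⟨by positivity, ?_⟩, ?_⟩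
      · rw [div_lt_one h1]; nlinarith [hp.2]
      · have e : y + β * (y * p / (y + β - β * p)) = y * (y + β) / (y + β - β * p) := by field_simp; ring
        simp only [hg]; rw [e]; clear e; generalize y + β - β * p = q at *; field_simp
  have hfg : ∀ v ∈ Set.Ioo (0:ℝ) 1, |g' v| • ((g v) ^ α * (1 - g v) ^ (-α)) =
      ((y + β) ^ (1 + α) * y ^ (-α)) * (v ^ α * (1 - v) ^ (-α) * (y / (y + β * v) ^ 2)) := by
    intro v hv
    have h1 := hden v hv
    have hv0 := hv.1
    have hv1 : 0 < 1 - v := by linarith [hv.2]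
    have e1 : 1 - g v = y * (1 - v) / (y + β * v) := by simp only [hg]; field_simp; ring
    rw [e1, abs_of_pos (by simp only [hg']; positivity), smul_eq_mul]
    simp only [hg, hg']
    rw [Real.div_rpow (by positivity) h1.le, Real.div_rpow (by positivity) h1.le,
      Real.mul_rpow hv0.le (by positivity), Real.mul_rpow hy.le hv1.le, Real.rpow_neg h1.le,
      Real.rpow_add (by positivity), Real.rpow_one]
    have := (Real.rpow_pos_of_pos h1 α).ne'
    field_simp
  have hK : 0 < (y + β) ^ (1 + α) * y ^ (-α) := by positivity
  have hi := (integrableOn_image_iff_integrableOn_abs_deriv_smul measurableSet_Ioo hd hinj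
    (fun p : ℝ => p ^ α * (1 - p) ^ (-α))).1 (by rw [himg]; exact hB)
  have hv := integral_image_eq_integral_abs_deriv_smul measurableSet_Ioo hd hinj
    (fun p : ℝ => p ^ α * (1 - p) ^ (-α))
  rw [himg, setIntegral_congr_fun measurableSet_Ioo hfg, integral_const_mul] at hv
  constructor
  · rw [integrableOn_congr_fun hfg measurableSet_Ioo] at hi
    have := hi.const_mul ((y + β) ^ (1 + α) * y ^ (-α))⁻¹
    refine this.congr (Filter.Eventually.of_forall fun v => ?_)
    simp only []
    rw [inv_mul_cancel_left₀ hK.ne']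
  · generalize (∫ v in Set.Ioo (0:ℝ) 1, v ^ α * (1 - v) ^ (-α) * (y / (y + β * v) ^ 2)) = Z at *
    rw [hv, ← mul_assoc, show (-1 - α) = -(1 + α) by ring, Real.rpow_neg (by positivity), Real.rpow_neg hy.le]
    have := (Real.rpow_pos_of_pos hy α).ne'
    have := (Real.rpow_pos_of_pos (by positivity : 0 < y + β) (1 + α)).ne'
    field_simp
end

section
open Complex MeasureTheory

theorem bint {a c : ℝ} (ha : 0 < a) (hc : 0 < c) :
    IntegrableOn (fun v : ℝ => v ^ (a - 1) * (1 - v) ^ (c - 1)) (Set.Ioo 0 1) ∧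
    ((∫ v in Set.Ioo (0:ℝ) 1, v ^ (a - 1) * (1 - v) ^ (c - 1) : ℝ) : ℂ) = betaIntegral a c := by
  have h := betaIntegral_convergent (u := a) (v := c) (by simpa) (by simpa)
  have e : ∀ v ∈ Set.Ioo (0:ℝ) 1, (v:ℂ) ^ ((a:ℂ) - 1) * (1 - (v:ℂ)) ^ ((c:ℂ) - 1) =
      ((v ^ (a - 1) * (1 - v) ^ (c - 1) : ℝ) : ℂ) := by
    intro v hv
    rw [ofReal_mul, ofReal_cpow hv.1.le, ofReal_cpow (by linarith [hv.2])]
    push_cast; rfl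
  rw [intervalIntegrable_iff_integrableOn_Ioo_of_le zero_le_one,
    integrableOn_congr_fun e measurableSet_Ioo] at h
  constructor
  · have := h.re
    simp at this
    exact this
  · rw [betaIntegral, intervalIntegral.integral_of_le zero_le_one, integral_Ioc_eq_integral_Ioo,
      setIntegral_congr_fun measurableSet_Ioo e]
    exact integral_ofReal.symm

theorem rising_poch (y : ℝ) (k : ℕ) : risingProd (y:ℂ) k = poch (1 + (y:ℂ)) k := by
  rw [risingProd, poch]; exact Finset.prod_congr rfl fun i _ => by ring

theorem rising_ne {y : ℝ} (hy : 0 < y) (k : ℕ) : risingProd (y:ℂ) k ≠ 0 := by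
  rw [rising_poch]; exact poch_ne (by simp; linarith) k

theorem rb {y : ℝ} (hy : 0 < y) (k : ℕ) :
    IntegrableOn (fun u : ℝ => u ^ k * (1 - u) ^ (y - 1)) (Set.Ioo 0 1) ∧
    ((∫ u in Set.Ioo (0:ℝ) 1, u ^ k * (1 - u) ^ (y - 1) : ℝ) : ℂ) = k.factorial / (y * risingProd y k) := by
  have h := bint (a := 1 + k) (c := y) (by positivity) hy
  have e : ∀ u : ℝ, u ^ ((1 + (k:ℝ)) - 1) = u ^ k := by
    intro u; rw [add_sub_cancel_left, Real.rpow_natCast]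
  simp only [e] at h
  refine ⟨h.1, ?_⟩
  rw [h.2]
  have h1 := beta_poch (α := 1) (β := y) (by simp) (by simpa) k
  have h2 := Gamma_mul_Gamma_eq_betaIntegral (s := 1) (t := y) (by simp) (by simpa)
  have hy' : (y:ℂ) ≠ 0 := by exact_mod_cast hy.ne'
  have hG : Gamma (y:ℂ) ≠ 0 := Gamma_ne_zero_of_re_pos (by simpa)
  rw [add_comm (1:ℂ) y, Gamma_add_one _ hy', Gamma_one, one_mul] at h2
  have h3 : betaIntegral 1 y * y = 1 := by
    apply mul_left_cancel₀ hG
    linear_combination -h2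
  have hr := rising_ne hy k
  rw [eq_div_iff (mul_ne_zero hy' hr), rising_poch, ← poch_one]
  push_cast
  linear_combination (y:ℂ) * h1 + poch 1 k * h3

theorem QQ_iter {b v : ℝ} (h0 : 0 ≤ v) (h1 : v ≤ 1) (k : ℕ) :
    iteratedDeriv k (fun u => FB b (v * -log (1 - u))) 0 = QQ k 0 (phB b) v := by
  have hd : DifferentiableOn ℂ (fun t => FB b ((v:ℂ) * t)) (SS (8/5)) := by
    refine ((FB_diff b).mono (SS_mono (by norm_num : (8/5:ℝ) ≤ 4))).comp (by fun_prop) fun t ht => SS_scale ht h0 h1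
  have := comp_iter hd k 0 (by simp)
  rw [this]
  simp only [sub_zero, inv_one, one_pow, one_mul, log_one, neg_zero]
  rw [QQ]
  refine Finset.sum_congr rfl fun l _ => ?_
  rw [iter_eq_tc, tc_scale, tc_FB, add_zero, phB]; ring

theorem H_taylor {b v : ℝ} (h0 : 0 ≤ v) (h1 : v ≤ 1) {u : ℝ} (hu : u ∈ Set.Ioo (0:ℝ) 1) :
    HasSum (fun k : ℕ => ((k.factorial : ℂ))⁻¹ * ((u:ℂ) ^ k * QQ k 0 (phB b) v))
      (FB b ((v:ℂ) * -log (1 - u))) := by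
  have hd : DifferentiableOn ℂ (fun u => FB b ((v:ℂ) * -log (1 - u))) (Metric.ball 0 1) := by
    intro w hw
    refine DifferentiableAt.differentiableWithinAt ?_
    have hm : (v:ℂ) * -log (1 - w) ∈ SS 4 := SS_mono (by norm_num) (SS_scale (log_mem hw) h0 h1)
    have a1 := (FB_diff b).differentiableAt ((SS_open 4).mem_nhds hm)
    have a2 := (log_hasDeriv hw).differentiableAt.const_mul (v:ℂ)
    exact DifferentiableAt.comp w (g := FB b) (f := fun w => (v:ℂ) * -log (1 - w)) a1 a2
  have := Complex.hasSum_taylorSeries_on_ball hd (z := u) (by simp [abs_of_pos hu.1, hu.2])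
  simp only [QQ_iter h0 h1, sub_zero, smul_eq_mul] at this
  exact this

theorem QQ_sum {y b : ℝ} (hy : 0 < y) (hb : b < 1) : ∃ M : ℕ → ℝ, Summable M ∧
    ∀ v : ℝ, 0 ≤ v → v ≤ 1 → ∀ k, ‖QQ k 0 (phB b) v‖ / ‖risingProd (y:ℂ) k‖ ≤ M k := by
  have hy0 : 0 < min y 1 := lt_min hy one_pos
  have hy1 : min y 1 ≤ 1 := min_le_right _ _
  obtain ⟨C, hC0, hC⟩ := QQ_bound (Cls_B hb) 0 (ε := min y 1 / 4) (by linarith) (by linarith)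
  set u : ℕ → ℝ := fun k => C * (2 * ((k:ℝ) + 2) ^ (-1 - (min y 1)/2)) with hu
  refine ⟨fun k => if k = 0 then ‖phB b 0‖ else u (k - 1), ?_, ?_⟩
  · rw [← summable_nat_add_iff 1]
    simpa using (sum_u (min y 1 / 2) (by linarith)).mul_left C
  · intro v h0 h1 k
    rcases k with _ | k
    · simp [QQ, risingProd, stirling1Unsigned]
    · have := hC v h0 h1 k
      rw [mul_assoc] at this
      have h2 := term_bound hy rfl hC0 k this
      simp only [Nat.add_sub_cancel, if_neg (Nat.succ_ne_zero k)]
      exact h2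

theorem L4 {y b v : ℝ} (hy : 0 < y) (hb : b < 1) (h0 : 0 < v) (h1 : v < 1) :
    HasSum (fun k : ℕ => QQ k 0 (phB b) v / risingProd (y:ℂ) k)
      ((∑' n : ℕ, y * (v / (y + ((n:ℝ) + 1 - b) * v) ^ 2) : ℝ) : ℂ) := by
  obtain ⟨M, hM, hQ⟩ := QQ_sum hy hb
  have hy' : (y:ℂ) ≠ 0 := by exact_mod_cast hy.ne'
  set F : ℕ → ℝ → ℂ := fun k u => ((k.factorial : ℂ))⁻¹ * QQ k 0 (phB b) v *
    ((u ^ k * (1 - u) ^ (y - 1) : ℝ) : ℂ) with hF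
  have hint : ∀ k, ∫ u in Set.Ioo (0:ℝ) 1, F k u = (y:ℂ)⁻¹ * (QQ k 0 (phB b) v / risingProd (y:ℂ) k) := by
    intro k
    have e : ∫ u in Set.Ioo (0:ℝ) 1, ((u ^ k * (1 - u) ^ (y - 1) : ℝ) : ℂ) =
      ((∫ u in Set.Ioo (0:ℝ) 1, u ^ k * (1 - u) ^ (y - 1) : ℝ) : ℂ) := integral_ofReal
    simp only [hF]
    rw [integral_const_mul, e, (rb hy k).2]
    have := fac_ne k
    have := rising_ne hy k
    field_simp
  have hnorm : ∀ k, ∫ u in Set.Ioo (0:ℝ) 1, ‖F k u‖ = y⁻¹ * (‖QQ k 0 (phB b) v‖ / ‖risingProd (y:ℂ) k‖) := by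
    intro k
    have e2 : ∀ u ∈ Set.Ioo (0:ℝ) 1, ‖F k u‖ = ‖((k.factorial : ℂ))⁻¹ * QQ k 0 (phB b) v‖ * (u ^ k * (1 - u) ^ (y - 1)) := by
      intro u hu
      simp only [hF]
      rw [norm_mul, norm_real, Real.norm_of_nonneg]
      exact mul_nonneg (pow_nonneg hu.1.le _) (Real.rpow_nonneg (by linarith [hu.2]) _)
    rw [setIntegral_congr_fun measurableSet_Ioo e2, integral_const_mul]
    have h3 := congrArg norm (rb hy k).2
    rw [norm_real, Real.norm_of_nonneg] at h3
    · rw [h3]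
      have := fac_ne k
      have : ‖(k.factorial:ℂ)‖ ≠ 0 := norm_ne_zero_iff.2 this
      simp only [norm_mul, norm_div, norm_inv, norm_real, Real.norm_of_nonneg hy.le]
      field_simp
    · exact setIntegral_nonneg measurableSet_Ioo fun u hu =>
        mul_nonneg (pow_nonneg hu.1.le _) (Real.rpow_nonneg (by linarith [hu.2]) _)
  have hs := hasSum_integral_of_summable_integral_norm (F := F) (μ := volume.restrict (Set.Ioo (0:ℝ) 1))
    (fun k => by
      simp only [hF]
      exact (Integrable.ofReal (rb hy k).1).const_mul _) (by
      simp only [hnorm]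
      exact (Summable.of_nonneg_of_le (fun _ => by positivity) (hQ v h0.le h1.le) hM).mul_left _)
  simp only [hint] at hs
  have hfb := (int_fb hy h0 hb)
  refine hs_congrC (hs.mul_left (y:ℂ)) (fun k => by rw [mul_inv_cancel_left₀ hy']) ?_
  rw [tsum_mul_left, hfb.tsum_eq, ofReal_mul]
  congr 1
  have e3 : ((∫ u in Set.Ioo (0:ℝ) 1, fbR b (v * -Real.log (1 - u)) * (1 - u) ^ (y - 1) : ℝ) : ℂ) =
    ∫ u in Set.Ioo (0:ℝ) 1, ((fbR b (v * -Real.log (1 - u)) * (1 - u) ^ (y - 1) : ℝ) : ℂ) := integral_ofReal.symm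
  rw [e3]
  refine setIntegral_congr_fun measurableSet_Ioo fun u hu => ?_
  have hl : Real.log (1 - u) < 0 := Real.log_neg (by linarith [hu.2]) (by linarith [hu.1])
  have ht := (H_taylor (b := b) h0.le h1.le hu).mul_right (((1 - u) ^ (y - 1) : ℝ) : ℂ)
  have e4 : (v:ℂ) * -log (1 - u) = ((v * -Real.log (1 - u) : ℝ) : ℂ) := by
    rw [show (1:ℂ) - u = ((1 - u : ℝ) : ℂ) by push_cast; ring, ← ofReal_log (by linarith [hu.2])]
    push_cast; ring
  rw [e4, fbR_eq (mul_pos h0 (by linarith))] at ht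
  have e5 : HasSum (fun k => F k u) _ := hs_congrC ht (fun k => by
    simp only [hF]; push_cast; ring) rfl
  exact (ofReal_mul _ _).trans e5.tsum_eq.symm

theorem L8 {y b α : ℝ} (hy : 0 < y) (hb : b < 1) (h0 : 0 < α) (h1 : α < 1)
    (hsum : Summable (fun n : ℕ => (y + ((n:ℝ) + 1 - b)) ^ (-1 - α))) :
    HasSum (fun k : ℕ => DD k 0 α (phB b) / risingProd (y:ℂ) k)
      ((α * y ^ α * ∑' n : ℕ, (y + ((n:ℝ) + 1 - b)) ^ (-1 - α) : ℝ) : ℂ) := by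
  obtain ⟨M, hM, hQ⟩ := QQ_sum hy hb
  have hα : 0 < (α:ℂ).re := by simpa
  have hβ : 0 < (1 - (α:ℂ)).re := by simp; linarith
  set W : ℝ → ℝ := fun v => v ^ (α - 1) * (1 - v) ^ ((1 - α) - 1) with hW
  obtain ⟨hWi, hWB⟩ := bint (a := α) (c := 1 - α) h0 (by linarith)
  have hWnn : ∀ v ∈ Set.Ioo (0:ℝ) 1, 0 ≤ W v := fun v hv =>
    mul_nonneg (Real.rpow_nonneg hv.1.le _) (Real.rpow_nonneg (by linarith [hv.2]) _)
  set Be := betaIntegral (α:ℂ) (1 - (α:ℂ)) with hBe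
  have hWB' : ((∫ v in Set.Ioo (0:ℝ) 1, W v : ℝ) : ℂ) = Be := by rw [hWB, hBe]; push_cast; rfl
  have hBe0 : Be ≠ 0 := by
    have := Gamma_mul_Gamma_eq_betaIntegral hα hβ
    intro h; rw [← hBe, h, mul_zero] at this
    exact mul_ne_zero (Gamma_ne_zero_of_re_pos hα) (Gamma_ne_zero_of_re_pos hβ) this
  have hD : ∀ k, DD k 0 α (phB b) * Be = ∫ v in Set.Ioo (0:ℝ) 1, (W v : ℂ) * QQ k 0 (phB b) v := by
    intro k
    have := DD_int hα hβ k 0 (phB b)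
    rw [← hBe] at this
    rw [this, intervalIntegral.integral_of_le zero_le_one, integral_Ioc_eq_integral_Ioo]
    refine setIntegral_congr_fun measurableSet_Ioo fun v hv => ?_
    have e1 : (fun j => poch ((α:ℂ) + (1 - α)) j / j.factorial * phB b j) = phB b := by
      ext j; rw [add_sub_cancel, poch_one, div_self (fac_ne j), one_mul]
    simp only [e1, hW]
    rw [ofReal_mul, ofReal_cpow hv.1.le, ofReal_cpow (by linarith [hv.2])]
    push_cast; rfl
  set F : ℕ → ℝ → ℂ := fun k v => (W v : ℂ) * QQ k 0 (phB b) v / risingProd (y:ℂ) k with hF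
  have hFi : ∀ k, Integrable (F k) (volume.restrict (Set.Ioo (0:ℝ) 1)) := by
    intro k
    have h1 : IntervalIntegrable (fun v => (W v : ℂ)) volume 0 1 := by
      rw [intervalIntegrable_iff_integrableOn_Ioo_of_le zero_le_one]
      exact Integrable.ofReal hWi
    have h2 := (h1.mul_continuousOn (g := fun v => QQ k 0 (phB b) v) (by unfold QQ; fun_prop)).div_const (risingProd (y:ℂ) k)
    rw [intervalIntegrable_iff_integrableOn_Ioo_of_le zero_le_one] at h2
    exact h2
  have hFn : ∀ k, ∫ v in Set.Ioo (0:ℝ) 1, ‖F k v‖ ≤ M k * ∫ v in Set.Ioo (0:ℝ) 1, W v := by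
    intro k
    rw [← integral_const_mul]
    refine setIntegral_mono_on (hFi k).norm (hWi.const_mul _) measurableSet_Ioo fun v hv => ?_
    simp only [hF]
    rw [norm_div, norm_mul, norm_real, Real.norm_of_nonneg (hWnn v hv), mul_div_assoc, mul_comm (M k)]
    exact mul_le_mul_of_nonneg_left (hQ v hv.1.le hv.2.le k) (hWnn v hv)
  have hs := hasSum_integral_of_summable_integral_norm hFi
    (Summable.of_nonneg_of_le (fun k => integral_nonneg fun _ => norm_nonneg _) hFn (hM.mul_right _))
  have hFk : ∀ k, ∫ v in Set.Ioo (0:ℝ) 1, F k v = DD k 0 α (phB b) / risingProd (y:ℂ) k * Be := by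
    intro k
    simp only [hF]
    rw [integral_div, ← hD]; ring
  simp only [hFk] at hs
  set S : ℝ → ℝ := fun v => ∑' n : ℕ, y * (v / (y + ((n:ℝ) + 1 - b) * v) ^ 2) with hS
  have hval : ∫ v in Set.Ioo (0:ℝ) 1, ∑' k, F k v = ((∫ v in Set.Ioo (0:ℝ) 1, W v * S v : ℝ) : ℂ) := by
    have e3 : ((∫ v in Set.Ioo (0:ℝ) 1, W v * S v : ℝ) : ℂ) =
      ∫ v in Set.Ioo (0:ℝ) 1, ((W v * S v : ℝ) : ℂ) := integral_ofReal.symm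
    rw [e3]
    refine setIntegral_congr_fun measurableSet_Ioo fun v hv => ?_
    have := (L4 hy hb hv.1 hv.2).mul_left (W v : ℂ)
    have e5 : HasSum (fun k => F k v) _ := hs_congrC this (fun k => by
      simp only [hF]; rw [mul_div_assoc]) rfl
    exact e5.tsum_eq.trans (ofReal_mul _ _).symm
  obtain ⟨hB1i, hB1⟩ := bint (a := α + 1) (c := 1 - α) (by linarith) (by linarith)
  have ee : (fun p : ℝ => p ^ (α + 1 - 1) * (1 - p) ^ (1 - α - 1)) = fun p : ℝ => p ^ α * (1 - p) ^ (-α) := by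
    ext p; rw [show α + 1 - 1 = α by ring, show 1 - α - 1 = -α by ring]
  rw [ee] at hB1i hB1
  have hBB : ((∫ p in Set.Ioo (0:ℝ) 1, p ^ α * (1 - p) ^ (-α) : ℝ) : ℂ) = α * Be := by
    rw [hB1]
    have := beta_poch hα hβ 1
    rw [add_sub_cancel, poch_one] at this
    simp [poch] at this
    rw [hBe, ← this]; push_cast; rfl
  have hWS : HasSum (fun n : ℕ => y ^ α * (y + ((n:ℝ) + 1 - b)) ^ (-1 - α) *
      ∫ p in Set.Ioo (0:ℝ) 1, p ^ α * (1 - p) ^ (-α)) (∫ v in Set.Ioo (0:ℝ) 1, W v * S v) := by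
    have hbn : ∀ n : ℕ, 0 < (n:ℝ) + 1 - b := fun n => by linarith [n.cast_nonneg (α := ℝ)]
    refine swap_nonneg (f := fun n v => v ^ α * (1 - v) ^ (-α) * (y / (y + ((n:ℝ) + 1 - b) * v) ^ 2))
      (fun n => (moebius hy (hbn n) hB1i).1) ?_ (fun n => (moebius hy (hbn n) hB1i).2)
      ((hsum.mul_left _).mul_right _) ?_
    · intro n v hv
      exact mul_nonneg (mul_nonneg (Real.rpow_nonneg hv.1.le _) (Real.rpow_nonneg (by linarith [hv.2]) _)) (by positivity)
    · intro v hv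
      have h := (((sum_sq hy hv.1 hb).mul_left y).hasSum).mul_left (W v)
      refine hs_congr h (fun n => ?_) rfl
      simp only [hW]
      have e : v ^ α = v ^ (α - 1) * v := by
        rw [Real.rpow_sub_one hv.1.ne']; have := hv.1.ne'; field_simp
      rw [e, show 1 - α - 1 = -α by ring]; ring
  rw [hval] at hs
  refine hs_congrC (hs.mul_right Be⁻¹) (fun k => by rw [mul_inv_cancel_right₀ hBe0]) ?_
  rw [← hWS.tsum_eq, tsum_mul_right, tsum_mul_left]
  rw [ofReal_mul _ (∫ p in Set.Ioo (0:ℝ) 1, p ^ α * (1 - p) ^ (-α)), hBB]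
  push_cast
  field_simp
end

section
open Complex MeasureTheory

theorem DD_zero (α : ℂ) (b x : ℝ) : DD 0 0 α (phB b) / risingProd (x:ℂ) 0 = 1 := by
  simp [DD, poch, stirling1Unsigned, phB, bernPoly, risingProd]

theorem key_real {x : ℝ} (hx : 0 < x) {α : ℝ} (h0 : 0 < α) (h1 : α < 1) :
    -(α:ℂ) * ((∑ k ∈ Finset.Icc 1 ⌊x⌋₊, (k:ℂ) ^ (-1 - (α:ℂ))) - riemannZeta (1 + α)) -
      (x:ℂ) ^ (-(α:ℂ)) * (1 + ∑' k, TT x (Int.fract x) k α) = 0 := by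
  have hN : ∀ n : ℕ, x + ((n:ℝ) + 1 - Int.fract x) = ((n + ⌊x⌋₊ : ℕ):ℝ) + 1 := by
    intro n
    have h := Int.floor_add_fract x
    have h2 : ((⌊x⌋₊ : ℕ) : ℝ) = (⌊x⌋ : ℝ) := natCast_floor_eq_intCast_floor hx.le
    push_cast; linarith
  have hs0 : Summable (fun n : ℕ => ((n:ℝ) + 1) ^ (-1 - α)) := by
    have := (summable_nat_add_iff 1).2 (Real.summable_nat_rpow.2 (show -1 - α < -1 by linarith))
    simpa using this
  have hs : Summable (fun n : ℕ => (x + ((n:ℝ) + 1 - Int.fract x)) ^ (-1 - α)) := by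
    simp only [hN]
    exact (summable_nat_add_iff ⌊x⌋₊).2 hs0
  have hL := L8 hx (Int.fract_lt_one x) h0 h1 hs
  have h2 := (hL.summable.tsum_eq_zero_add).symm.trans hL.tsum_eq
  rw [DD_zero] at h2
  change 1 + ∑' k, TT x (Int.fract x) k α = _ at h2
  rw [h2]
  simp only [hN]
  have hz := zeta_eq_tsum_one_div_nat_add_one_cpow (s := 1 + α) (by simpa)
  have hc : ∀ n : ℕ, 1 / ((n:ℂ) + 1) ^ (1 + (α:ℂ)) = ((((n:ℝ) + 1) ^ (-1 - α) : ℝ) : ℂ) := by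
    intro n
    rw [ofReal_cpow (by positivity), one_div, ← cpow_neg]
    push_cast; congr 1; ring
  simp only [hc] at hz
  rw [← ofReal_tsum, ← hs0.sum_add_tsum_nat_add ⌊x⌋₊] at hz
  have hI : ∑ k ∈ Finset.Icc 1 ⌊x⌋₊, (k:ℂ) ^ (-1 - (α:ℂ)) =
      ((∑ i ∈ Finset.range ⌊x⌋₊, ((i:ℝ) + 1) ^ (-1 - α) : ℝ) : ℂ) := by
    rw [← Finset.Ico_succ_right_eq_Icc, Finset.sum_Ico_eq_sum_range, ofReal_sum]
    refine Finset.sum_congr (by simp) fun i _ => ?_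
    rw [ofReal_cpow (by positivity)]
    push_cast; congr 1; ring
  rw [hI, hz]
  have hxx : (x:ℂ) ^ (-(α:ℂ)) * ((x ^ α : ℝ) : ℂ) = 1 := by
    rw [ofReal_cpow hx.le, ← cpow_add _ _ (by exact_mod_cast hx.ne')]
    simp
  rw [ofReal_add, ofReal_mul, ofReal_mul]
  linear_combination (-(α:ℂ) * ((∑' n : ℕ, (((n + ⌊x⌋₊ : ℕ):ℝ) + 1) ^ (-1 - α) : ℝ) : ℂ)) * hxx

theorem key {x : ℝ} (hx : 0 < x) {m : ℂ} (hm : m ≠ -1) :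
    (m + 1) * ((∑ k ∈ Finset.Icc 1 ⌊x⌋₊, (k:ℂ) ^ m) - riemannZeta (-m)) -
      (x:ℂ) ^ (m + 1) * (1 + ∑' k, TT x (Int.fract x) k (-m - 1)) = 0 := by
  set Φ : ℂ → ℂ := fun m => (m + 1) * ((∑ k ∈ Finset.Icc 1 ⌊x⌋₊, (k:ℂ) ^ m) - riemannZeta (-m)) -
      (x:ℂ) ^ (m + 1) * (1 + ∑' k, TT x (Int.fract x) k (-m - 1)) with hΦ
  have hd : DifferentiableOn ℂ Φ {-1}ᶜ := by
    intro z hz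
    refine DifferentiableAt.differentiableWithinAt ?_
    have a1 : DifferentiableAt ℂ (fun m : ℂ => riemannZeta (-m)) z :=
      DifferentiableAt.comp z (g := riemannZeta) (f := fun m : ℂ => -m)
        (differentiableAt_riemannZeta (fun h => hz (by
          rw [Set.mem_singleton_iff]; linear_combination -h))) (by fun_prop)
    have a2 : DifferentiableAt ℂ (fun m : ℂ => ∑ k ∈ Finset.Icc 1 ⌊x⌋₊, (k:ℂ) ^ m) z := by
      refine DifferentiableAt.fun_sum fun k hk => ?_
      have : (k:ℂ) ≠ 0 := by
        have := (Finset.mem_Icc.1 hk).1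
        exact_mod_cast (by omega : k ≠ 0)
      exact differentiableAt_id.const_cpow (Or.inl this)
    have a3 : DifferentiableAt ℂ (fun m : ℂ => (x:ℂ) ^ (m + 1)) z :=
      (differentiableAt_id.add_const 1).const_cpow (Or.inl (by exact_mod_cast hx.ne'))
    have a4 : DifferentiableAt ℂ (fun m : ℂ => ∑' k, TT x (Int.fract x) k (-m - 1)) z :=
      DifferentiableAt.comp z (g := fun α => ∑' k, TT x (Int.fract x) k α) (f := fun m : ℂ => -m - 1)
        (TT_tsum_diff hx (Int.fract_lt_one x) _) (by fun_prop)
    exact (((differentiableAt_id.add_const 1).mul (a2.sub a1)).sub (a3.mul (a4.const_add 1)))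
  have han := hd.analyticOnNhd isOpen_compl_singleton
  have hpre : IsPreconnected ({-1}ᶜ : Set ℂ) :=
    (isConnected_compl_singleton_of_one_lt_rank (by simp [Complex.rank_real_complex]) (-1)).isPreconnected
  have hfr : ∃ᶠ z in nhdsWithin (-(3/2):ℂ) {-(3/2)}ᶜ, Φ z = 0 := by
    have ht : Filter.Tendsto (fun t : ℝ => ((-1 - t : ℝ) : ℂ)) (nhdsWithin (1/2) {1/2}ᶜ)
        (nhdsWithin (-(3/2):ℂ) {-(3/2)}ᶜ) := by
      refine tendsto_nhdsWithin_of_tendsto_nhds_of_eventually_within _ ?_ ?_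
      · have : ContinuousAt (fun t : ℝ => ((-1 - t : ℝ) : ℂ)) (1/2) := by fun_prop
        have h := this.tendsto
        norm_num at h
        refine (Filter.Tendsto.mono_left ?_ nhdsWithin_le_nhds)
        convert h using 2 <;> norm_num
      · filter_upwards [self_mem_nhdsWithin] with t ht h
        apply ht
        have h' : ((-1 - t : ℝ) : ℂ) = ((-(3/2) : ℝ) : ℂ) := by rw [h]; push_cast; rfl
        have := ofReal_injective h'
        rw [Set.mem_singleton_iff]; linarith
    refine ht.frequently (Filter.Eventually.frequently ?_)
    filter_upwards [nhdsWithin_le_nhds (Ioo_mem_nhds (show (0:ℝ) < 1/2 by norm_num) (show (1/2:ℝ) < 1 by norm_num))] with t ht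
    have := key_real hx ht.1 ht.2
    rw [← this]
    simp only [hΦ]
    push_cast
    rw [show -(-1 - (t:ℂ)) - 1 = t by ring, show -(-1 - (t:ℂ)) = 1 + t by ring, show -1 - (t:ℂ) + 1 = -t by ring]
  exact han.eqOn_zero_of_preconnected_of_frequently_eq_zero hpre
    (show -(3/2:ℂ) ∈ ({-1}ᶜ : Set ℂ) by
      rw [Set.mem_compl_iff, Set.mem_singleton_iff]; norm_num) hfr hm

theorem faulhaber_final (m : ℂ) (hm : m ≠ -1) (x : ℝ) (hx : 0 < x) :
    Summable (fun k : ℕ =>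
      ‖(-1 : ℂ) ^ (k + 1) *
          (∑ l ∈ Finset.Icc 1 (k + 1),
            cchoose (m + 1) l * (S1 (k + 1) l : ℂ) * (bernPoly l (Int.fract x) : ℂ)) /
        risingProd (x : ℂ) (k + 1)‖) ∧
    (∑ k ∈ Finset.Icc 1 ⌊x⌋₊, (k : ℂ) ^ m) =
      (x : ℂ) ^ (m + 1) / (m + 1) + riemannZeta (-m) +
        (x : ℂ) ^ (m + 1) / (m + 1) *
          ∑' k : ℕ,
            (-1 : ℂ) ^ (k + 1) *
                (∑ l ∈ Finset.Icc 1 (k + 1),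
                  cchoose (m + 1) l * (S1 (k + 1) l : ℂ) * (bernPoly l (Int.fract x) : ℂ)) /
              risingProd (x : ℂ) (k + 1) := by
  have e : ∀ k : ℕ, (-1 : ℂ) ^ (k + 1) *
          (∑ l ∈ Finset.Icc 1 (k + 1),
            cchoose (m + 1) l * (S1 (k + 1) l : ℂ) * (bernPoly l (Int.fract x) : ℂ)) /
        risingProd (x : ℂ) (k + 1) = TT x (Int.fract x) k (-m - 1) := by
    intro k; rw [term_eq, TT]
  simp only [e]
  refine ⟨TT_summable hx (Int.fract_lt_one x) _, ?_⟩
  have h := key hx hm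
  have hm1 : m + 1 ≠ 0 := fun h => hm (by linear_combination h)
  field_simp
  linear_combination h
end

open Finset in
/-- The extended generalized Faulhaber formula (formula (28) of Theorem 5.1). -/
theorem extended_generalized_faulhaber (m : ℂ) (hm : m ≠ -1) (x : ℝ) (hx : 0 < x) :
    Summable (fun k : ℕ =>
      ‖(-1 : ℂ) ^ (k + 1) *
          (∑ l ∈ Icc 1 (k + 1),
            cchoose (m + 1) l * (S1 (k + 1) l : ℂ) * (bernPoly l (Int.fract x) : ℂ)) /
        risingProd (x : ℂ) (k + 1)‖) ∧
    (∑ k ∈ Icc 1 ⌊x⌋₊, (k : ℂ) ^ m) =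
      (x : ℂ) ^ (m + 1) / (m + 1) + riemannZeta (-m) +
        (x : ℂ) ^ (m + 1) / (m + 1) *
          ∑' k : ℕ,
            (-1 : ℂ) ^ (k + 1) *
                (∑ l ∈ Icc 1 (k + 1),
                  cchoose (m + 1) l * (S1 (k + 1) l : ℂ) * (bernPoly l (Int.fract x) : ℂ)) /
              risingProd (x : ℂ) (k + 1) := by
  exact faulhaber_final m hm x hx
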